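/- Let (X,μ,S,T) be an ergodic measure preserving system with two commuting invertible measure-preserving transformations S and T. Then for any f1, f2, f3 ∈ L∞(μ), the averages (1/N²) Σ_{i=0}^{N-1} Σ_{j=0}^{N-1} f1(S^i x) · f2(T^j x) · f3(S^i T^j x) converge for μ-almost every x ∈ X as N → ∞. -/

import Mathlib

open MeasureTheory Filter

/-!
Let `osc` be the oscillation at infinity of the cubic averages; they converge almost everywhere if
and only if `∫ osc = 0`. Van der Corput's inequality along `S`, Birkhoff's theorem along `T` and
Maker's theorem along `S` bound `(∫ osc) ^ 4` by the fourth power of the box seminorm of `f3`, the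
squared norm of the `S × S`-invariant part of `f3 ⊗ f3` in the relatively independent square
`μ ×_{I_T} μ`. With `S × S` and `id × T` that square is again a commuting system, an extension of
the original one through the second coordinate, and the box seminorm is bounded there by the energy
`‖𝔼(f3 | I_S ∨ I_T)‖²` of the lift of `f3`.

If `f3` is `I_S ∨ I_T`-measurable the averages converge, because for `f3 = u v` with `u` invariant
under `S` and `v` under `T` they are products of two Birkhoff averages. Subtracting the structured
part of `f3`, one finds that `(∫ osc) ^ 8` is at most a constant times the energy that `f3` gains in
the square. Energies are bounded and `∫ osc` does not change in extensions, so applying this to an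
extension of nearly maximal energy gives `∫ osc = 0`. The conditional measures behind the square
require a standard Borel space, which is reached by coding a point by the array of the values of
`f1, f2, f3` along its orbit.
-/

namespace CubicAverage

open Finset ProbabilityTheory
open scoped BigOperators ENNReal Topology

section Birkhoff

variable {X : Type*} {T : X → X} {g : X → ℝ}

/-- The maximal function `max_{k ≤ n} ∑_{i < k} g (T^[i] x)` of the Birkhoff sums. -/
noncomputable def maxBirkhoffSum (T : X → X) (g : X → ℝ) (n : ℕ) (x : X) : ℝ :=
  partialSups (fun k => birkhoffSum T g k x) n

lemma maxBirkhoffSum_zero : maxBirkhoffSum T g 0 = 0 := by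
  ext x
  simp [maxBirkhoffSum]

lemma maxBirkhoffSum_succ (n : ℕ) (x : X) :
    maxBirkhoffSum T g (n + 1) x = max 0 (g x + maxBirkhoffSum T g n (T x)) := by
  have hmax (m : ℕ) (y : X) : maxBirkhoffSum T g (m + 1) y
      = max (maxBirkhoffSum T g m y) (birkhoffSum T g (m + 1) y) := partialSups_add_one _ _
  induction n generalizing x with
  | zero => simp [hmax, maxBirkhoffSum_zero]
  | succ n ih =>
    rw [hmax (n + 1), ih, hmax n (T x), birkhoffSum_succ', max_assoc, max_add_add_left]

lemma maxBirkhoffSum_nonneg (n : ℕ) (x : X) : 0 ≤ maxBirkhoffSum T g n x :=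
  (birkhoffSum_zero T g x).symm.le.trans (le_partialSups_of_le (birkhoffSum T g · x) n.zero_le)

lemma monotone_maxBirkhoffSum (x : X) : Monotone (maxBirkhoffSum T g · x) :=
  partialSups_monotone _

lemma tendsto_maxBirkhoffSum_atTop {x : X} (hx : ¬BddAbove (Set.range (birkhoffSum T g · x))) :
    Tendsto (maxBirkhoffSum T g · x) atTop atTop :=
  tendsto_atTop_atTop_of_monotone' (monotone_maxBirkhoffSum x)
    (by rwa [← bddAbove_range_partialSups] at hx)

lemma bddAbove_range_birkhoffSum_apply_iff (x : X) :
    BddAbove (Set.range (birkhoffSum T g · (T x)))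
      ↔ BddAbove (Set.range (birkhoffSum T g · x)) := by
  simp only [bddAbove_def, Set.forall_mem_range]
  constructor
  · rintro ⟨B, hB⟩
    refine ⟨max 0 (g x + B), fun n => ?_⟩
    cases n with
    | zero => simp
    | succ n => exact birkhoffSum_succ' T g n x ▸ le_max_of_le_right (by simpa using hB n)
  · rintro ⟨B, hB⟩
    exact ⟨B - g x, fun n => by linarith [hB (n + 1), birkhoffSum_succ' T g n x]⟩

variable [mX : MeasurableSpace X] {μ : Measure X}

lemma integral_comp_of_measurePreserving {Y : Type*} [MeasurableSpace Y] {ν : Measure Y} {p : Y → X}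
    (hp : MeasurePreserving p ν μ) {f : X → ℝ} (hf : AEStronglyMeasurable f μ) :
    ∫ y, f (p y) ∂ν = ∫ x, f x ∂μ := by
  rw [← hp.map_eq] at hf ⊢
  exact (integral_map hp.aemeasurable hf).symm

lemma integrable_maxBirkhoffSum (hT : MeasurePreserving T μ μ) (hg : Integrable g μ) (n : ℕ) :
    Integrable (maxBirkhoffSum T g n) μ := by
  induction n with
  | zero => exact maxBirkhoffSum_zero (T := T) (g := g) ▸ integrable_zero X ℝ μ
  | succ n ih =>
    rw [funext (maxBirkhoffSum_succ n)]
    exact (integrable_zero _ _ _).sup (hg.add (hT.integrable_comp_of_integrable ih))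

-- Garsia's argument: `∫ (F (n+1) - F n ∘ T) = ∫ (F (n+1) - F n) ≥ 0` for the maximal functions `F`.
theorem integral_nonneg_of_not_bddAbove_birkhoffSum (hT : MeasurePreserving T μ μ)
    (hg : Integrable g μ) (hunb : ∀ᵐ x ∂μ, ¬BddAbove (Set.range (birkhoffSum T g · x))) :
    0 ≤ ∫ x, g x ∂μ := by
  have hint := integrable_maxBirkhoffSum hT hg
  have hintT (n : ℕ) : Integrable (fun x => maxBirkhoffSum T g n (T x)) μ :=
    hT.integrable_comp_of_integrable (hint n)
  have hlim : Tendsto (fun n => ∫ x, (maxBirkhoffSum T g (n + 1) x - maxBirkhoffSum T g n (T x)) ∂μ)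
      atTop (nhds (∫ x, g x ∂μ)) := by
    refine tendsto_integral_of_dominated_convergence (fun x => |g x|)
      (fun n => ((hint _).sub (hintT n)).aestronglyMeasurable) hg.abs
      (fun n => Eventually.of_forall fun x => ?_) ?_
    · have := maxBirkhoffSum_nonneg (T := T) (g := g) n (T x)
      rw [Real.norm_eq_abs, maxBirkhoffSum_succ, abs_le, ← max_sub_sub_right]
      exact ⟨le_max_of_le_right (by linarith [neg_abs_le (g x)]),
        max_le (by linarith [abs_nonneg (g x)]) (by linarith [le_abs_self (g x)])⟩
    · filter_upwards [hunb] with x hx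
      have htop := tendsto_maxBirkhoffSum_atTop (bddAbove_range_birkhoffSum_apply_iff x |>.not.2 hx)
      refine tendsto_const_nhds.congr' ?_
      filter_upwards [htop.eventually_ge_atTop (-g x)] with n hn
      rw [maxBirkhoffSum_succ, max_eq_right (by linarith), add_sub_cancel_right]
  refine ge_of_tendsto' hlim fun n => ?_
  rw [integral_sub (hint _) (hintT n),
    integral_comp_of_measurePreserving hT (hint n).aestronglyMeasurable]
  exact sub_nonneg.2 (integral_mono (hint n) (hint _) fun x => monotone_maxBirkhoffSum x n.le_succ)

lemma measurable_birkhoffSum (hT : Measurable T) (hg : Measurable g) (n : ℕ) :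
    Measurable (birkhoffSum T g n) :=
  Finset.measurable_fun_sum _ fun i _ => hg.comp (hT.iterate i)

lemma measurableSet_invariants_not_bddAbove_birkhoffSum (hT : Measurable T) (hg : Measurable g) :
    MeasurableSet[MeasurableSpace.invariants T] {x | ¬BddAbove (Set.range (birkhoffSum T g · x))} :=
  ⟨(measurableSet_bddAbove_range (measurable_birkhoffSum hT hg)).compl,
    Set.ext fun x => (bddAbove_range_birkhoffSum_apply_iff x).not⟩

theorem ae_bddAbove_birkhoffSum_of_setIntegral_neg (hT : MeasurePreserving T μ μ)
    (hg : Measurable g) (hgi : Integrable g μ)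
    (hneg : ∀ A, MeasurableSet[MeasurableSpace.invariants T] A → μ A ≠ 0 → ∫ x in A, g x ∂μ < 0) :
    ∀ᵐ x ∂μ, BddAbove (Set.range (birkhoffSum T g · x)) := by
  set A := {x | ¬BddAbove (Set.range (birkhoffSum T g · x))}
  have hA : MeasurableSet[MeasurableSpace.invariants T] A :=
    measurableSet_invariants_not_bddAbove_birkhoffSum hT.measurable hg
  have hTA : MeasurePreserving T (μ.restrict A) (μ.restrict A) := by
    simpa only [hA.2] using hT.restrict_preimage hA.1
  have hnonneg := integral_nonneg_of_not_bddAbove_birkhoffSum hTA hgi.integrableOn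
    (ae_restrict_mem hA.1)
  exact ae_iff.2 <| by_contra fun hμA => (hneg A hA hμA).not_ge hnonneg

lemma condExp_invariants_comp : μ[g | MeasurableSpace.invariants T] ∘ T
    = μ[g | MeasurableSpace.invariants T] :=
  MeasurableSpace.comp_eq_of_measurable_invariants stronglyMeasurable_condExp.measurable

variable [IsFiniteMeasure μ]

lemma ae_eventually_birkhoffAverage_le (hT : MeasurePreserving T μ μ) (hg : Measurable g)
    (hgi : Integrable g μ) {ε : ℝ} (hε : 0 < ε) :
    ∀ᵐ x ∂μ, ∀ᶠ N in atTop, birkhoffAverage ℝ T g N x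
      ≤ (μ[g | MeasurableSpace.invariants T]) x + ε := by
  have hle := MeasurableSpace.invariants_le T
  set e := μ[g | MeasurableSpace.invariants T]
  have he : Measurable e := (stronglyMeasurable_condExp.mono hle).measurable
  have hei : Integrable e μ := integrable_condExp
  set c : X → ℝ := fun x => e x + ε / 2
  have hc : c ∘ T = c := funext fun x =>
    congrArg (· + ε / 2) (congrFun (condExp_invariants_comp (T := T)) x)
  have hci : Integrable c μ := hei.add (integrable_const _)
  have hbdd : ∀ᵐ x ∂μ, BddAbove (Set.range (birkhoffSum T (g - c) · x)) := by
    refine ae_bddAbove_birkhoffSum_of_setIntegral_neg hT (hg.sub (he.add_const _)) (hgi.sub hci)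
      fun A hA hμA => ?_
    simp only [Pi.sub_apply, c]
    rw [integral_sub hgi.integrableOn hci.integrableOn,
      integral_add hei.integrableOn (integrable_const _), setIntegral_condExp hle hgi hA,
      setIntegral_const, smul_eq_mul]
    have : 0 < μ.real A := ENNReal.toReal_pos hμA (measure_ne_top μ A)
    linarith [mul_pos this (half_pos hε)]
  filter_upwards [hbdd] with x ⟨B, hB⟩
  filter_upwards [(tendsto_const_div_atTop_nhds_zero_nat B).eventually_le_const (half_pos hε),
    eventually_gt_atTop 0] with N hN hN0
  have hsub : birkhoffAverage ℝ T (g - c) N x = birkhoffAverage ℝ T g N x - c x := by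
    rw [birkhoffAverage_sub, Pi.sub_apply, Pi.sub_apply, birkhoffAverage_of_comp_eq ℝ hc]
    exact_mod_cast hN0.ne'
  have havg : birkhoffAverage ℝ T (g - c) N x ≤ B / N := by
    rw [birkhoffAverage, smul_eq_mul, inv_mul_eq_div]
    gcongr
    exact hB ⟨N, rfl⟩
  simp only [c] at hsub
  linarith

theorem ae_tendsto_birkhoffAverage (hT : MeasurePreserving T μ μ) (hg : Integrable g μ) :
    ∀ᵐ x ∂μ, Tendsto (birkhoffAverage ℝ T g · x) atTop
      (nhds ((μ[g | MeasurableSpace.invariants T]) x)) := by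
  wlog hgm : Measurable g generalizing g
  · have hmk := hg.aestronglyMeasurable.ae_eq_mk
    filter_upwards [this (hg.congr hmk) hg.aestronglyMeasurable.stronglyMeasurable_mk.measurable,
      ae_all_iff.2 (hT.quasiMeasurePreserving.birkhoffAverage_ae_eq_of_ae_eq ℝ hmk),
      condExp_congr_ae (m := MeasurableSpace.invariants T) hmk] with x hx havg hcond
    simpa only [havg, hcond] using hx
  have hε (n : ℕ) : (0 : ℝ) < 1 / (n + 1) := Nat.one_div_pos_of_nat
  filter_upwards [ae_all_iff.2 fun n => ae_eventually_birkhoffAverage_le hT hgm hg (hε n),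
    ae_all_iff.2 fun n => ae_eventually_birkhoffAverage_le hT hgm.neg hg.neg (hε n),
    condExp_neg (μ := μ) g (MeasurableSpace.invariants T)] with x hupper hlower hneg
  rw [Metric.tendsto_nhds]
  intro ε hε
  obtain ⟨n, hn⟩ := exists_nat_one_div_lt hε
  filter_upwards [hupper n, hlower n] with N hN hN'
  rw [hneg, birkhoffAverage_neg] at hN'
  simp only [Pi.neg_apply] at hN'
  rw [Real.dist_eq, abs_lt]
  constructor <;> linarith

end Birkhoff

section Averages

variable {ι : Type*} {s : Finset ι} {φ : ι → ℝ} {C : ℝ}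

lemma abs_expect_le_of_forall_abs_le (hC : 0 ≤ C) (h : ∀ i ∈ s, |φ i| ≤ C) :
    |𝔼 i ∈ s, φ i| ≤ C := by
  rcases s.eq_empty_or_nonempty with rfl | hs
  · simpa using hC
  · exact (abs_expect_le s φ).trans (expect_le hs h)

lemma sq_expect_le_expect_sq (s : Finset ι) (φ : ι → ℝ) :
    (𝔼 i ∈ s, φ i) ^ 2 ≤ 𝔼 i ∈ s, φ i ^ 2 := by
  rcases s.eq_empty_or_nonempty with rfl | hs
  · simp
  · simpa [hs] using expect_mul_sq_le_sq_mul_sq s φ 1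

lemma tendsto_expect {α : Type*} {l : Filter α} {F : ι → α → ℝ} {L : ι → ℝ}
    (h : ∀ i ∈ s, Tendsto (F i) l (𝓝 (L i))) :
    Tendsto (fun a => 𝔼 i ∈ s, F i a) l (𝓝 (𝔼 i ∈ s, L i)) := by
  simp only [expect_eq_sum_div_card]
  exact (tendsto_finsetSum s h).div_const _

variable {X : Type*} {mX : MeasurableSpace X} {μ : Measure X} {F : ι → X → ℝ}

lemma measurable_expect (h : ∀ i ∈ s, Measurable (F i)) : Measurable fun x => 𝔼 i ∈ s, F i x := by
  simp only [expect_eq_sum_div_card]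
  exact (Finset.measurable_fun_sum s h).div_const _

lemma integrable_expect (h : ∀ i ∈ s, Integrable (F i) μ) :
    Integrable (fun x => 𝔼 i ∈ s, F i x) μ := by
  simp only [expect_eq_sum_div_card]
  exact (integrable_finsetSum s h).div_const _

lemma integral_expect (h : ∀ i ∈ s, Integrable (F i) μ) :
    ∫ x, 𝔼 i ∈ s, F i x ∂μ = 𝔼 i ∈ s, ∫ x, F i x ∂μ := by
  simp only [expect_eq_sum_div_card]
  rw [integral_div, integral_finsetSum s h]

lemma birkhoffAverage_eq_expect (T : X → X) (g : X → ℝ) (N : ℕ) (x : X) :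
    birkhoffAverage ℝ T g N x = 𝔼 i ∈ range N, g (T^[i] x) := by
  rw [expect_eq_sum_div_card, card_range, birkhoffAverage, birkhoffSum, smul_eq_mul, inv_mul_eq_div]

end Averages

section Maker

variable {X : Type*} {m mX : MeasurableSpace X} {μ : Measure X} {S : X → X}

lemma ae_forall_iterate (hS : MeasurePreserving S μ μ) {p : X → Prop} (h : ∀ᵐ x ∂μ, p x) :
    ∀ᵐ x ∂μ, ∀ i, p (S^[i] x) :=
  ae_all_iff.2 fun i => (hS.iterate i).quasiMeasurePreserving.ae h

lemma le_iSup_abs_sub_tail {a : ℕ → ℝ} {L : ℝ} (h : Tendsto a atTop (𝓝 L)) {m n : ℕ} (hmn : m ≤ n) :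
    |a n - L| ≤ ⨆ k, |a (k + m) - L| := by
  have hbdd := ((tendsto_add_atTop_iff_nat m).2 (h.sub_const L).abs).bddAbove_range
  simpa [hmn] using le_ciSup hbdd (n - m)

lemma tendsto_iSup_abs_sub_tail {a : ℕ → ℝ} {L : ℝ} (h : Tendsto a atTop (𝓝 L)) :
    Tendsto (fun m => ⨆ k, |a (k + m) - L|) atTop (𝓝 0) := by
  have hlim : Tendsto (fun n => |a n - L|) atTop (𝓝 0) := by simpa using (h.sub_const L).abs
  refine Metric.tendsto_atTop.2 fun ε hε => ?_
  obtain ⟨M, hM⟩ := eventually_atTop.1 (hlim.eventually_le_const (half_pos hε))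
  refine ⟨M, fun m hm => ?_⟩
  rw [Real.dist_0_eq_abs, abs_of_nonneg (Real.iSup_nonneg fun k => abs_nonneg _)]
  exact (ciSup_le fun k => hM _ (by lia)).trans_lt (half_lt_self hε)

lemma exists_seq_tendsto_condExp_zero {D : ℕ → X → ℝ}
    {h : X → ℝ} (hD : ∀ n, AEStronglyMeasurable (D n) μ) (hh : Integrable h μ)
    (hDh : ∀ n, ∀ᵐ x ∂μ, |D n x| ≤ h x) (hlim : ∀ᵐ x ∂μ, Tendsto (D · x) atTop (𝓝 0)) :
    ∃ ns : ℕ → ℕ, ∀ᵐ x ∂μ, Tendsto (fun k => (μ[D (ns k) | m]) x) atTop (𝓝 0) := by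
  have hL1 : Tendsto (fun n => eLpNorm (D n) 1 μ) atTop (𝓝 0) := by
    simpa [eLpNorm_one_eq_lintegral_enorm, Real.enorm_eq_ofReal_abs] using
      tendsto_lintegral_norm_of_dominated_convergence hD hh.2 hDh hlim
  have hcond : Tendsto (fun n => eLpNorm (μ[D n | m] - 0) 1 μ) atTop (𝓝 0) :=
    tendsto_of_tendsto_of_tendsto_of_le_of_le tendsto_const_nhds hL1 (fun _ => zero_le)
      fun n => by simpa using eLpNorm_condExp_le_eLpNorm (D n) le_rfl
  obtain ⟨ns, -, hns⟩ := (tendstoInMeasure_of_tendsto_eLpNorm one_ne_zero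
    (fun n => integrable_condExp.aestronglyMeasurable) aestronglyMeasurable_zero
    hcond).exists_seq_tendsto_ae
  exact ⟨ns, hns⟩

/-- **Maker's ergodic theorem**. -/
theorem ae_tendsto_expect_comp_of_dominated [IsFiniteMeasure μ] (hS : MeasurePreserving S μ μ)
    {F : ℕ → X → ℝ} {f h : X → ℝ} (hF : ∀ n, AEStronglyMeasurable (F n) μ) (hh : Integrable h μ)
    (hFh : ∀ n, ∀ᵐ x ∂μ, |F n x| ≤ h x) (hlim : ∀ᵐ x ∂μ, Tendsto (F · x) atTop (𝓝 (f x))) :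
    ∀ᵐ x ∂μ, Tendsto (fun N => 𝔼 i ∈ range N, F N (S^[i] x)) atTop
      (𝓝 ((μ[f | MeasurableSpace.invariants S]) x)) := by
  have hf : AEStronglyMeasurable f μ := aestronglyMeasurable_of_tendsto_ae atTop hF hlim
  have hfh : ∀ᵐ x ∂μ, |f x| ≤ h x := by
    filter_upwards [ae_all_iff.2 hFh, hlim] with x hx hlimx
    exact le_of_tendsto hlimx.abs (Eventually.of_forall hx)
  have hfi : Integrable f μ := hh.mono' hf hfh
  set D : ℕ → X → ℝ := fun m x => ⨆ k, |F (k + m) x - f x|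
  have hD (m : ℕ) : AEStronglyMeasurable (D m) μ :=
    (AEMeasurable.iSup fun k => ((hF (k + m)).sub hf).norm.aemeasurable).aestronglyMeasurable
  have hDh (m : ℕ) : ∀ᵐ x ∂μ, |D m x| ≤ h x + h x := by
    filter_upwards [ae_all_iff.2 hFh, hfh] with x hFx hfx
    rw [abs_of_nonneg (Real.iSup_nonneg fun k => abs_nonneg _)]
    exact ciSup_le fun k => (abs_sub _ _).trans (add_le_add (hFx _) hfx)
  have hDi (m : ℕ) : Integrable (D m) μ := (hh.add hh).mono' (hD m) (hDh m)
  obtain ⟨ns, hns⟩ := exists_seq_tendsto_condExp_zero (m := MeasurableSpace.invariants S) hD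
    (hh.add hh) hDh (hlim.mono fun x => tendsto_iSup_abs_sub_tail)
  filter_upwards [hns, ae_forall_iterate hS hlim, ae_tendsto_birkhoffAverage hS hfi,
    ae_all_iff.2 fun m => ae_tendsto_birkhoffAverage hS (hDi m)] with x hnsx hlimx hfx hDx
  simp only [birkhoffAverage_eq_expect] at hfx hDx
  suffices hdiff : Tendsto (fun N => 𝔼 i ∈ range N, (F N (S^[i] x) - f (S^[i] x))) atTop (𝓝 0) by
    simpa [expect_sub_distrib] using hdiff.add hfx
  refine Metric.tendsto_nhds.2 fun ε hε => ?_
  obtain ⟨k, hk⟩ := (hnsx.eventually_lt_const hε).exists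
  filter_upwards [(hDx (ns k)).eventually_lt_const hk, eventually_ge_atTop (ns k)] with N hN hNk
  rw [Real.dist_0_eq_abs]
  exact (abs_expect_le _ _).trans_lt <|
    (expect_le_expect fun i _ => le_iSup_abs_sub_tail (hlimx i) hNk).trans_lt hN

end Maker

section Oscillation

variable {E : Type*} [SeminormedAddCommGroup E]

/-- The oscillation at infinity of a sequence, `lim sup_{m, n → ∞} edist (a m) (a n)`. It vanishes
exactly for Cauchy sequences, and unlike a limit it is defined, subadditive and measurable
without any convergence hypothesis. -/
noncomputable def osc (a : ℕ → E) : ℝ≥0∞ :=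
  limsup (fun p : ℕ × ℕ => edist (a p.1) (a p.2)) atTop

lemma osc_eq_zero_iff {a : ℕ → E} : osc a = 0 ↔ CauchySeq a := by
  rw [osc, ← le_zero_iff, limsup_le_iff, EMetric.cauchySeq_iff]
  refine forall₂_congr fun ε _ => ?_
  rw [eventually_atTop_prod_self']

lemma osc_eq_zero_iff_exists_tendsto [CompleteSpace E] {a : ℕ → E} :
    osc a = 0 ↔ ∃ L, Tendsto a atTop (𝓝 L) :=
  osc_eq_zero_iff.trans cauchy_map_iff_exists_tendsto

lemma limsup_add_le_add_limsup {α : Type*} {l : Filter α} (u v : α → ℝ≥0∞) :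
    limsup (u + v) l ≤ limsup u l + limsup v l := by
  refine ENNReal.le_of_forall_pos_le_add fun ε hε hlt => ?_
  obtain ⟨hu, hv⟩ := ENNReal.add_lt_top.1 hlt
  have hε2 : (ε : ℝ≥0∞) / 2 ≠ 0 := by simpa using hε.ne'
  refine limsup_le_of_le (by isBoundedDefault) ?_
  filter_upwards [eventually_lt_of_limsup_lt (ENNReal.lt_add_right hu.ne hε2),
    eventually_lt_of_limsup_lt (ENNReal.lt_add_right hv.ne hε2)] with x hux hvx
  exact (add_le_add hux.le hvx.le).trans_eq (by rw [add_add_add_comm, ENNReal.add_halves])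

lemma osc_add_le (a b : ℕ → E) : osc (a + b) ≤ osc a + osc b :=
  (limsup_le_limsup (Eventually.of_forall fun _ => edist_add_add_le _ _ _ _)).trans
    (limsup_add_le_add_limsup _ _)

lemma osc_le_of_norm_le_of_tendsto {a : ℕ → E} {b : ℕ → ℝ} {L : ℝ} (hab : ∀ n, ‖a n‖ ≤ b n)
    (hb : Tendsto b atTop (𝓝 L)) : osc a ≤ ENNReal.ofReal (2 * L) := by
  have hlim : Tendsto (fun p : ℕ × ℕ => ENNReal.ofReal (b p.1 + b p.2)) atTop
      (𝓝 (ENNReal.ofReal (L + L))) := by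
    rw [← prod_atTop_atTop_eq]
    exact ENNReal.tendsto_ofReal ((hb.comp tendsto_fst).add (hb.comp tendsto_snd))
  rw [two_mul, ← hlim.limsup_eq]
  refine limsup_le_limsup (Eventually.of_forall fun p => ?_)
  beta_reduce
  rw [edist_dist]
  exact ENNReal.ofReal_le_ofReal ((dist_le_norm_add_norm _ _).trans (add_le_add (hab _) (hab _)))

lemma measurable_osc {X : Type*} [MeasurableSpace X] {a : ℕ → X → ℝ} (ha : ∀ n, Measurable (a n)) :
    Measurable fun x => osc (a · x) :=
  Measurable.limsup' (fun p : ℕ × ℕ => (ha p.1).edist (ha p.2)) atTop_countable_basis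
    fun _ => Set.to_countable _

end Oscillation

section BoundedMeasurable

/-- `f` is measurable and bounded by `C` in absolute value, everywhere and not only almost
everywhere: compositions with iterates and factor maps then need no null sets. -/
def BoundedMeasurable {X : Type*} [MeasurableSpace X] (f : X → ℝ) (C : ℝ) : Prop :=
  Measurable f ∧ ∀ x, |f x| ≤ C

variable {X Y : Type*} {m mX : MeasurableSpace X} {mY : MeasurableSpace Y} {f g : X → ℝ}
  {C K : ℝ}

namespace BoundedMeasurable

lemma measurable (hf : BoundedMeasurable f C) : Measurable f := hf.1

lemma abs_le (hf : BoundedMeasurable f C) (x : X) : |f x| ≤ C := hf.2 x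

lemma mono (hm : m ≤ mX) (hf : @BoundedMeasurable X m f C) : BoundedMeasurable f C :=
  ⟨hf.measurable.mono hm le_rfl, hf.abs_le⟩

lemma comp (hf : BoundedMeasurable f C) {p : Y → X} (hp : Measurable p) :
    BoundedMeasurable (f ∘ p) C :=
  ⟨hf.measurable.comp hp, fun y => hf.abs_le (p y)⟩

lemma abs (hf : BoundedMeasurable f C) : BoundedMeasurable (fun x => |f x|) C :=
  ⟨hf.measurable.norm, fun x => (abs_abs (f x)).trans_le (hf.abs_le x)⟩

lemma mul (hf : BoundedMeasurable f C) (hg : BoundedMeasurable g K) :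
    BoundedMeasurable (fun x => f x * g x) (C * K) :=
  ⟨hf.measurable.mul hg.measurable, fun x => (abs_mul _ _).trans_le <|
    mul_le_mul (hf.abs_le x) (hg.abs_le x) (abs_nonneg _) ((abs_nonneg _).trans (hf.abs_le x))⟩

lemma sub (hf : BoundedMeasurable f C) (hg : BoundedMeasurable g K) :
    BoundedMeasurable (fun x => f x - g x) (C + K) :=
  ⟨hf.measurable.sub hg.measurable,
    fun x => (abs_sub _ _).trans (add_le_add (hf.abs_le x) (hg.abs_le x))⟩

lemma expect {ι : Type*} {s : Finset ι} {F : ι → X → ℝ} (hF : ∀ i, BoundedMeasurable (F i) C)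
    (hC : 0 ≤ C) : BoundedMeasurable (fun x => 𝔼 i ∈ s, F i x) C :=
  ⟨measurable_expect fun i _ => (hF i).measurable,
    fun x => abs_expect_le_of_forall_abs_le hC fun i _ => (hF i).abs_le x⟩

lemma indicator_one {A : Set X} (hA : MeasurableSet A) : BoundedMeasurable (A.indicator 1) 1 :=
  ⟨measurable_one.indicator hA,
    fun x => (norm_indicator_le_norm_self (1 : X → ℝ) x).trans_eq norm_one⟩

variable {μ : Measure X}

lemma memLp [IsFiniteMeasure μ] (hf : BoundedMeasurable f C) (p : ℝ≥0∞) : MemLp f p μ :=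
  MemLp.of_bound hf.measurable.aestronglyMeasurable C (Eventually.of_forall hf.abs_le)

lemma integrable [IsFiniteMeasure μ] (hf : BoundedMeasurable f C) : Integrable f μ :=
  memLp_one_iff_integrable.1 (hf.memLp 1)

lemma nonneg [NeZero μ] (hf : BoundedMeasurable f C) : 0 ≤ C :=
  have ⟨x⟩ := μ.nonempty_of_neZero
  (abs_nonneg _).trans (hf.abs_le x)

end BoundedMeasurable

end BoundedMeasurable

section CubicAverage

variable {X : Type*} {S T : X → X} {f1 f2 f3 : X → ℝ} {C K : ℝ}

/-- The cubic average `𝔼_{i, j < N} f1 (S^i x) f2 (T^j x) f3 (S^i T^j x)`. -/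
noncomputable def cubicAverage (S T : X → X) (f1 f2 f3 : X → ℝ) (N : ℕ) (x : X) : ℝ :=
  𝔼 i ∈ range N, 𝔼 j ∈ range N, f1 (S^[i] x) * f2 (T^[j] x) * f3 (S^[i] (T^[j] x))

lemma cubicAverage_eq_sum (N : ℕ) (x : X) :
    cubicAverage S T f1 f2 f3 N x = ((N : ℝ) ^ 2)⁻¹ *
      ∑ i ∈ range N, ∑ j ∈ range N, f1 (S^[i] x) * f2 (T^[j] x) * f3 (S^[i] (T^[j] x)) := by
  simp only [cubicAverage, expect_eq_sum_div_card, card_range, ← sum_div]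
  field

lemma cubicAverage_add (g g' : X → ℝ) (N : ℕ) (x : X) :
    cubicAverage S T f1 f2 (g + g') N x
      = cubicAverage S T f1 f2 g N x + cubicAverage S T f1 f2 g' N x := by
  simp only [cubicAverage, Pi.add_apply, mul_add, expect_add_distrib]

lemma cubicAverage_const_smul (c : ℝ) (g : X → ℝ) (N : ℕ) (x : X) :
    cubicAverage S T f1 f2 (c • g) N x = c * cubicAverage S T f1 f2 g N x := by
  simp only [cubicAverage, Pi.smul_apply, smul_eq_mul, mul_left_comm _ c, mul_expect]

variable [MeasurableSpace X] {μ : Measure X}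

/-- `S` and `T` are commuting measure-preserving transformations of `(X, μ)`. -/
structure IsCommutingSystem (μ : Measure X) (S T : X → X) : Prop where
  left : MeasurePreserving S μ μ
  right : MeasurePreserving T μ μ
  commute : Function.Commute S T

lemma IsCommutingSystem.iterate_comm (h : IsCommutingSystem μ S T) (i j : ℕ) (x : X) :
    S^[i] (T^[j] x) = T^[j] (S^[i] x) :=
  (h.commute.iterate_iterate i j) x

lemma IsCommutingSystem.measurable_cubicAverage (h : IsCommutingSystem μ S T) (h1 : Measurable f1)
    (h2 : Measurable f2) (h3 : Measurable f3) (N : ℕ) :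
    Measurable (cubicAverage S T f1 f2 f3 N) :=
  have hS (i : ℕ) : Measurable S^[i] := h.left.measurable.iterate i
  have hT (j : ℕ) : Measurable T^[j] := h.right.measurable.iterate j
  measurable_expect fun i _ => measurable_expect fun j _ =>
    ((h1.comp (hS i)).mul (h2.comp (hT j))).mul (h3.comp ((hS i).comp (hT j)))

lemma ae_tendsto_expect_abs_expect [IsFiniteMeasure μ] (hS : MeasurePreserving S μ μ)
    (hT : MeasurePreserving T μ μ) {g : X → ℝ} (hg : BoundedMeasurable g K) :
    ∀ᵐ x ∂μ, Tendsto (fun N => 𝔼 i ∈ range N, |𝔼 j ∈ range N, g (T^[j] (S^[i] x))|) atTop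
      (𝓝 ((μ[fun x => |(μ[g | MeasurableSpace.invariants T]) x| |
        MeasurableSpace.invariants S]) x)) := by
  rcases eq_zero_or_neZero μ with rfl | hμ
  · simp
  have havg (N : ℕ) : BoundedMeasurable (fun x => |𝔼 j ∈ range N, g (T^[j] x)|) K :=
    (BoundedMeasurable.expect (F := fun j => g ∘ T^[j])
      (fun j => hg.comp (hT.measurable.iterate j)) (hg.nonneg (μ := μ))).abs
  refine ae_tendsto_expect_comp_of_dominated (F := fun N x => |𝔼 j ∈ range N, g (T^[j] x)|) hS
    (fun N => (havg N).measurable.aestronglyMeasurable) (integrable_const K)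
    (fun N => Eventually.of_forall (havg N).abs_le) ?_
  filter_upwards [ae_tendsto_birkhoffAverage hT hg.integrable] with x hx
  simpa only [birkhoffAverage_eq_expect] using hx.abs

lemma lintegral_osc_le_of_tendsto {a b : ℕ → X → ℝ} {L : X → ℝ} (hL : Integrable L μ)
    (hL0 : 0 ≤ᵐ[μ] L) (hab : ∀ n x, |a n x| ≤ b n x)
    (hb : ∀ᵐ x ∂μ, Tendsto (b · x) atTop (𝓝 (L x))) :
    ∫⁻ x, osc (a · x) ∂μ ≤ ENNReal.ofReal (2 * ∫ x, L x ∂μ) := by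
  rw [← integral_const_mul, ofReal_integral_eq_lintegral_ofReal (hL.const_mul 2)
    (hL0.mono fun x hx => mul_nonneg zero_le_two hx)]
  exact lintegral_mono_ae (hb.mono fun x hx => osc_le_of_norm_le_of_tendsto (hab · x) hx)

lemma lintegral_osc_sq_le_of_tendsto {a b : ℕ → X → ℝ} {L : X → ℝ} (hL : Integrable L μ)
    (hL0 : 0 ≤ᵐ[μ] L) (hab : ∀ n x, |a n x| ≤ b n x)
    (hb : ∀ᵐ x ∂μ, Tendsto (b · x) atTop (𝓝 √(L x))) :
    ∫⁻ x, osc (a · x) ^ 2 ∂μ ≤ ENNReal.ofReal (4 * ∫ x, L x ∂μ) := by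
  rw [← integral_const_mul, ofReal_integral_eq_lintegral_ofReal (hL.const_mul 4)
    (hL0.mono fun x hx => mul_nonneg zero_le_four hx)]
  refine lintegral_mono_ae ?_
  filter_upwards [hb, hL0] with x hx hLx
  calc osc (a · x) ^ 2 ≤ ENNReal.ofReal (2 * √(L x)) ^ 2 := by
        gcongr
        exact osc_le_of_norm_le_of_tendsto (hab · x) hx
    _ = ENNReal.ofReal (4 * L x) := by
        rw [← ENNReal.ofReal_pow (by positivity), mul_pow, Real.sq_sqrt hLx]
        norm_num

theorem lintegral_osc_cubicAverage_le [IsFiniteMeasure μ] (h : IsCommutingSystem μ S T)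
    (h1 : BoundedMeasurable f1 C) (h2 : BoundedMeasurable f2 C) (h3 : BoundedMeasurable f3 K) :
    ∫⁻ x, osc (cubicAverage S T f1 f2 f3 · x) ∂μ
      ≤ ENNReal.ofReal (2 * (C ^ 2 * ∫ x, |f3 x| ∂μ)) := by
  set q := μ[fun x => |f3 x| | MeasurableSpace.invariants T]
  set L := μ[fun x => |q x| | MeasurableSpace.invariants S]
  have hL0 : 0 ≤ᵐ[μ] L := condExp_nonneg (Eventually.of_forall fun x => abs_nonneg _)
  have hab (N : ℕ) (x : X) : |cubicAverage S T f1 f2 f3 N x|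
      ≤ C ^ 2 * 𝔼 i ∈ range N, |𝔼 j ∈ range N, (|f3 (T^[j] (S^[i] x))|)| := by
    rw [mul_expect]
    refine (abs_expect_le _ _).trans (expect_le_expect fun i _ => ?_)
    refine (abs_expect_le _ _).trans (le_trans ?_
      (mul_le_mul_of_nonneg_left (le_abs_self _) (sq_nonneg C)))
    rw [mul_expect]
    refine expect_le_expect fun j _ => ?_
    rw [abs_mul, abs_mul, sq, h.iterate_comm]
    gcongr
    exacts [(abs_nonneg _).trans (h1.abs_le x), h1.abs_le _, h2.abs_le _]
  refine (lintegral_osc_le_of_tendsto (integrable_condExp.const_mul (C ^ 2))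
    (hL0.mono fun x hx => mul_nonneg (sq_nonneg C) hx) hab
    ((ae_tendsto_expect_abs_expect h.left h.right h3.abs).mono fun x hx => hx.const_mul _)).trans ?_
  rw [integral_const_mul, integral_condExp (MeasurableSpace.invariants_le S)]
  have hq : ∫ x, |q x| ∂μ ≤ ∫ x, |f3 x| ∂μ := by
    simpa only [abs_abs] using integral_abs_condExp_le (μ := μ) fun x => |f3 x|
  gcongr

end CubicAverage

section VanDerCorput

variable {ι κ : Type*} {s : Finset ι} {u : ℕ → ℝ} {C K : ℝ}

lemma abs_expect_sub_expect_add_le (hu : ∀ i, |u i| ≤ K) (N k : ℕ) :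
    |𝔼 i ∈ range N, u i - 𝔼 i ∈ range N, u (i + k)| ≤ 2 * k * K / N := by
  induction k with
  | zero => simp
  | succ k ih =>
    have hstep : |𝔼 i ∈ range N, u (i + k) - 𝔼 i ∈ range N, u (i + (k + 1))| ≤ 2 * K / N := by
      have htel := sum_range_sub' (fun i => u (i + k)) N
      simp only [add_right_comm _ 1 k, zero_add] at htel
      simp only [← add_assoc]
      rw [← expect_sub_distrib, expect_eq_sum_div_card, card_range, htel, abs_div, Nat.abs_cast]
      gcongr
      exact (abs_sub _ _).trans ((add_le_add (hu _) (hu _)).trans_eq (two_mul K).symm)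
    calc _ ≤ 2 * k * K / N + 2 * K / N := (abs_sub_le _ _ _).trans (add_le_add ih hstep)
      _ = _ := by push_cast; ring

lemma abs_expect_sub_expect_expect_add_le (hu : ∀ i, |u i| ≤ K) (N : ℕ) {H : ℕ} (hH : H ≠ 0) :
    |𝔼 i ∈ range N, u i - 𝔼 i ∈ range N, 𝔼 k ∈ range H, u (i + k)| ≤ 2 * H * K / N := by
  have hK : 0 ≤ K := (abs_nonneg _).trans (hu 0)
  have hmean : 𝔼 i ∈ range N, u i = 𝔼 _k ∈ range H, 𝔼 i ∈ range N, u i :=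
    (expect_const (nonempty_range_iff.2 hH) _).symm
  rw [hmean, expect_comm (range N), ← expect_sub_distrib]
  refine abs_expect_le_of_forall_abs_le (by positivity) fun k hk => ?_
  refine (abs_expect_sub_expect_add_le hu N k).trans ?_
  have : k ≤ H := (mem_range.1 hk).le
  gcongr

lemma sq_expect_mul_le {b : ι → ℝ} (hb : ∀ j, |b j| ≤ C) (s : Finset ι) (v : ι → ℝ) :
    (𝔼 j ∈ s, b j * v j) ^ 2 ≤ C ^ 2 * 𝔼 j ∈ s, v j ^ 2 := by
  rw [mul_expect]
  refine (sq_expect_le_expect_sq s _).trans (expect_le_expect fun j _ => ?_)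
  rw [mul_pow]
  exact mul_le_mul_of_nonneg_right (sq_le_sq' (abs_le.1 (hb j)).1 (abs_le.1 (hb j)).2) (sq_nonneg _)

lemma expect_sq_expect_mul_le {a : κ → ℝ} (ha : ∀ k, |a k| ≤ C) (s : Finset ι) (t : Finset κ)
    (F : κ → ι → ℝ) :
    𝔼 j ∈ s, (𝔼 k ∈ t, a k * F k j) ^ 2
      ≤ C ^ 2 * 𝔼 k ∈ t, 𝔼 k' ∈ t, |𝔼 j ∈ s, F k j * F k' j| := by
  have hexpand : 𝔼 j ∈ s, (𝔼 k ∈ t, a k * F k j) ^ 2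
      = 𝔼 k ∈ t, 𝔼 k' ∈ t, a k * a k' * 𝔼 j ∈ s, F k j * F k' j := by
    simp only [sq (𝔼 _k ∈ t, _), expect_mul_expect, mul_mul_mul_comm (a _)]
    rw [expect_comm]
    refine expect_congr rfl fun k _ => ?_
    rw [expect_comm]
    simp only [mul_expect]
  rw [hexpand, mul_expect]
  refine expect_le_expect fun k _ => ?_
  rw [mul_expect]
  refine expect_le_expect fun k' _ => (le_abs_self _).trans ?_
  rw [abs_mul, abs_mul, sq]
  gcongr
  exacts [(abs_nonneg _).trans (ha k), ha k, ha k']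

/-- **Van der Corput's inequality** for a double average with weights `a i * b j`: shifting `i` and
applying the Cauchy–Schwarz inequality removes both weights. -/
theorem abs_expect_expect_mul_le {a : ℕ → ℝ} {b : ι → ℝ} {F : ℕ → ι → ℝ} (ha : ∀ i, |a i| ≤ C)
    (hb : ∀ j, |b j| ≤ C) (hF : ∀ i j, |F i j| ≤ K) (hK : 0 ≤ K) (N : ℕ) {H : ℕ} (hH : H ≠ 0) :
    |𝔼 i ∈ range N, 𝔼 j ∈ s, a i * b j * F i j| ≤ 2 * H * (C ^ 2 * K) / N +
      √(C ^ 4 * 𝔼 k ∈ range H, 𝔼 k' ∈ range H, 𝔼 i ∈ range N,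
        |𝔼 j ∈ s, F (i + k) j * F (i + k') j|) := by
  have hC : 0 ≤ C := (abs_nonneg _).trans (ha 0)
  set u : ℕ → ℝ := fun i => 𝔼 j ∈ s, a i * b j * F i j
  have hu (i : ℕ) : |u i| ≤ C ^ 2 * K :=
    abs_expect_le_of_forall_abs_le (by positivity) fun j _ => by
      rw [abs_mul, abs_mul, sq]
      gcongr
      exacts [ha i, hb j, hF i j]
  have hshift (i : ℕ) : 𝔼 k ∈ range H, u (i + k)
      = 𝔼 j ∈ s, b j * 𝔼 k ∈ range H, a (i + k) * F (i + k) j := by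
    simp only [u, mul_expect]
    rw [expect_comm]
    exact expect_congr rfl fun j _ => expect_congr rfl fun k _ => by ring
  have hsq : (𝔼 i ∈ range N, 𝔼 k ∈ range H, u (i + k)) ^ 2
      ≤ C ^ 4 * 𝔼 k ∈ range H, 𝔼 k' ∈ range H, 𝔼 i ∈ range N,
        |𝔼 j ∈ s, F (i + k) j * F (i + k') j| :=
    calc _ ≤ 𝔼 i ∈ range N, (𝔼 k ∈ range H, u (i + k)) ^ 2 := sq_expect_le_expect_sq _ _
      _ ≤ 𝔼 i ∈ range N, C ^ 2 * (C ^ 2 * 𝔼 k ∈ range H, 𝔼 k' ∈ range H,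
          |𝔼 j ∈ s, F (i + k) j * F (i + k') j|) := expect_le_expect fun i _ => by
        rw [hshift]
        refine (sq_expect_mul_le hb s _).trans ?_
        gcongr
        exact expect_sq_expect_mul_le (fun k => ha (i + k)) s (range H) fun k => F (i + k)
      _ = _ := by
        simp only [← mul_assoc, ← pow_add, ← mul_expect]
        rw [expect_comm]
        exact congrArg _ (expect_congr rfl fun k _ => expect_comm _ _ _)
  calc |𝔼 i ∈ range N, u i|
      ≤ |𝔼 i ∈ range N, u i - 𝔼 i ∈ range N, 𝔼 k ∈ range H, u (i + k)|
        + |𝔼 i ∈ range N, 𝔼 k ∈ range H, u (i + k)| := by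
        simpa using abs_add_le (𝔼 i ∈ range N, u i - 𝔼 i ∈ range N, 𝔼 k ∈ range H, u (i + k))
          (𝔼 i ∈ range N, 𝔼 k ∈ range H, u (i + k))
    _ ≤ _ := add_le_add (abs_expect_sub_expect_expect_add_le hu N hH) (Real.abs_le_sqrt hsq)

end VanDerCorput

section Correlation

variable {X : Type*} [MeasurableSpace X] {μ : Measure X} {S T : X → X} {f f1 f2 f3 : X → ℝ}
  {C K : ℝ}

lemma sq_integral_le_integral_sq [IsProbabilityMeasure μ] (hf : MemLp f 2 μ) :
    (∫ x, f x ∂μ) ^ 2 ≤ ∫ x, f x ^ 2 ∂μ := by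
  have hvar := variance_nonneg f μ
  rw [variance_eq_sub hf] at hvar
  exact sub_nonneg.1 hvar

lemma sq_integral_mul_le [IsProbabilityMeasure μ] {w q : X → ℝ} (hw : BoundedMeasurable w C)
    (hq : MemLp q 2 μ) : (∫ x, w x * q x ∂μ) ^ 2 ≤ C ^ 2 * ∫ x, q x ^ 2 ∂μ := by
  have hwq : MemLp (fun x => w x * q x) 2 μ := hq.mul (hw.memLp ⊤)
  refine (sq_integral_le_integral_sq hwq).trans ?_
  rw [← integral_const_mul]
  refine integral_mono hwq.integrable_sq (hq.integrable_sq.const_mul _) fun x => ?_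
  have hwx : w x ^ 2 ≤ C ^ 2 := sq_le_sq' (abs_le.1 (hw.abs_le x)).1 (abs_le.1 (hw.abs_le x)).2
  simpa only [mul_pow] using mul_le_mul_of_nonneg_right hwx (sq_nonneg (q x))

lemma sq_lintegral_le_lintegral_sq [IsProbabilityMeasure μ] {g : X → ℝ≥0∞}
    (hg : AEMeasurable g μ) : (∫⁻ x, g x ∂μ) ^ 2 ≤ ∫⁻ x, g x ^ 2 ∂μ := by
  have h := eLpNorm'_le_eLpNorm'_of_exponent_le one_pos one_le_two μ hg.aestronglyMeasurable
  simp only [eLpNorm', enorm_eq_self, ENNReal.rpow_one, div_one, ENNReal.rpow_two] at h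
  calc (∫⁻ x, g x ∂μ) ^ 2 ≤ ((∫⁻ x, g x ^ 2 ∂μ) ^ (1 / 2 : ℝ)) ^ 2 := by gcongr
    _ = ∫⁻ x, g x ^ 2 ∂μ := by
      rw [← ENNReal.rpow_natCast, ← ENNReal.rpow_mul]
      norm_num

/-- The conditional correlation `𝔼(f ∘ S^k · f ∘ S^k' | T)` of two iterates of `f` given the
`T`-invariant sets. -/
noncomputable def condCorrelation (μ : Measure X) (S T : X → X) (f : X → ℝ) (k k' : ℕ) : X → ℝ :=
  μ[fun x => f (S^[k] x) * f (S^[k'] x) | MeasurableSpace.invariants T]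

lemma BoundedMeasurable.mul_iterate (hf : BoundedMeasurable f K) (hS : Measurable S) (k k' : ℕ) :
    BoundedMeasurable (fun x => f (S^[k] x) * f (S^[k'] x)) (K * K) :=
  (hf.comp (hS.iterate k)).mul (hf.comp (hS.iterate k'))

lemma ae_tendsto_expect_abs_expect_mul_iterate [IsFiniteMeasure μ] (h : IsCommutingSystem μ S T)
    (hf : BoundedMeasurable f K) (k k' : ℕ) :
    ∀ᵐ x ∂μ, Tendsto (fun N => 𝔼 i ∈ range N, |𝔼 j ∈ range N,
        f (S^[i + k] (T^[j] x)) * f (S^[i + k'] (T^[j] x))|) atTop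
      (𝓝 ((μ[fun x => |condCorrelation μ S T f k k' x| | MeasurableSpace.invariants S]) x)) := by
  filter_upwards [ae_tendsto_expect_abs_expect h.left h.right
    (hf.mul_iterate h.left.measurable k k')] with x hx
  have hiter (i k j : ℕ) : S^[i + k] (T^[j] x) = S^[k] (T^[j] (S^[i] x)) := by
    rw [add_comm, Function.iterate_add_apply, h.iterate_comm i j]
  simpa only [hiter, condCorrelation] using hx

theorem lintegral_osc_cubicAverage_sq_le [IsFiniteMeasure μ] (h : IsCommutingSystem μ S T)
    (h1 : BoundedMeasurable f1 C) (h2 : BoundedMeasurable f2 C) (h3 : BoundedMeasurable f3 K)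
    {H : ℕ} (hH : H ≠ 0) :
    ∫⁻ x, osc (cubicAverage S T f1 f2 f3 · x) ^ 2 ∂μ ≤ ENNReal.ofReal (4 * (C ^ 4 *
      𝔼 k ∈ range H, 𝔼 k' ∈ range H, ∫ x, |condCorrelation μ S T f3 k k' x| ∂μ)) := by
  rcases eq_zero_or_neZero μ with rfl | hμ
  · simp
  set L : ℕ → ℕ → X → ℝ := fun k k' =>
    μ[fun x => |condCorrelation μ S T f3 k k' x| | MeasurableSpace.invariants S]
  have hL (k k' : ℕ) : Integrable (L k k') μ := integrable_condExp
  have hL0 (k k' : ℕ) : 0 ≤ᵐ[μ] L k k' :=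
    condExp_nonneg (Eventually.of_forall fun x => abs_nonneg _)
  have hbound (N : ℕ) (x : X) := abs_expect_expect_mul_le (s := range N)
    (a := fun i => f1 (S^[i] x)) (b := fun j => f2 (T^[j] x))
    (F := fun i j => f3 (S^[i] (T^[j] x))) (fun i => h1.abs_le _) (fun j => h2.abs_le _)
    (fun i j => h3.abs_le _) (h3.nonneg (μ := μ)) N hH
  have hlim : ∀ᵐ x ∂μ, Tendsto (fun N : ℕ => 2 * H * (C ^ 2 * K) / N +
      √(C ^ 4 * 𝔼 k ∈ range H, 𝔼 k' ∈ range H, 𝔼 i ∈ range N, |𝔼 j ∈ range N,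
        f3 (S^[i + k] (T^[j] x)) * f3 (S^[i + k'] (T^[j] x))|)) atTop
      (𝓝 √(C ^ 4 * 𝔼 k ∈ range H, 𝔼 k' ∈ range H, L k k' x)) := by
    filter_upwards [ae_all_iff.2 fun k => ae_all_iff.2 fun k' =>
      ae_tendsto_expect_abs_expect_mul_iterate h h3 k k'] with x hx
    simpa only [zero_add] using (tendsto_const_div_atTop_nhds_zero_nat _).add
      ((tendsto_expect fun k _ => tendsto_expect fun k' _ => hx k k').const_mul (C ^ 4)).sqrt
  have hint : Integrable (fun x => 𝔼 k ∈ range H, 𝔼 k' ∈ range H, L k k' x) μ :=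
    integrable_expect fun k _ => integrable_expect fun k' _ => hL k k'
  refine (lintegral_osc_sq_le_of_tendsto (hint.const_mul (C ^ 4)) ?_ hbound hlim).trans_eq ?_
  · filter_upwards [ae_all_iff.2 fun k => ae_all_iff.2 fun k' => hL0 k k'] with x hx
    exact mul_nonneg (by positivity) (expect_nonneg fun k _ => expect_nonneg fun k' _ => hx k k')
  · rw [integral_const_mul, integral_expect fun k _ => integrable_expect fun k' _ => hL k k']
    simp only [integral_expect fun k' _ => hL _ k', L,
      integral_condExp (MeasurableSpace.invariants_le S)]

theorem lintegral_osc_cubicAverage_pow_four_le [IsProbabilityMeasure μ]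
    (h : IsCommutingSystem μ S T)
    (h1 : BoundedMeasurable f1 C) (h2 : BoundedMeasurable f2 C) (h3 : BoundedMeasurable f3 K)
    {H : ℕ} (hH : H ≠ 0) :
    (∫⁻ x, osc (cubicAverage S T f1 f2 f3 · x) ∂μ) ^ 4 ≤ ENNReal.ofReal (16 * C ^ 8 *
      𝔼 k ∈ range H, 𝔼 k' ∈ range H, ∫ x, condCorrelation μ S T f3 k k' x ^ 2 ∂μ) := by
  have hosc : Measurable fun x => osc (cubicAverage S T f1 f2 f3 · x) :=
    measurable_osc (h.measurable_cubicAverage h1.measurable h2.measurable h3.measurable)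
  have hL2 (k k' : ℕ) : MemLp (condCorrelation μ S T f3 k k') 2 μ :=
    MemLp.condExp one_le_two ((h3.mul_iterate h.left.measurable k k').memLp 2)
  calc (∫⁻ x, osc (cubicAverage S T f1 f2 f3 · x) ∂μ) ^ 4
      ≤ (∫⁻ x, osc (cubicAverage S T f1 f2 f3 · x) ^ 2 ∂μ) ^ 2 := by
        rw [show 4 = 2 * 2 from rfl, pow_mul]
        gcongr
        exact sq_lintegral_le_lintegral_sq hosc.aemeasurable
    _ ≤ ENNReal.ofReal (4 * (C ^ 4 * 𝔼 k ∈ range H, 𝔼 k' ∈ range H,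
          ∫ x, |condCorrelation μ S T f3 k k' x| ∂μ)) ^ 2 := by
        gcongr
        exact lintegral_osc_cubicAverage_sq_le h h1 h2 h3 hH
    _ = ENNReal.ofReal (16 * C ^ 8 * (𝔼 k ∈ range H, 𝔼 k' ∈ range H,
          ∫ x, |condCorrelation μ S T f3 k k' x| ∂μ) ^ 2) := by
        rw [← ENNReal.ofReal_pow (by positivity)]
        ring_nf
    _ ≤ _ := by
        gcongr
        refine (sq_expect_le_expect_sq _ _).trans (expect_le_expect fun k _ =>
          (sq_expect_le_expect_sq _ _).trans (expect_le_expect fun k' _ => ?_))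
        simpa only [Pi.abs_apply, sq_abs] using sq_integral_le_integral_sq (hL2 k k').abs

end Correlation

section ConditionalExpectation

variable {X Y : Type*} {m : MeasurableSpace X} {m' : MeasurableSpace Y} [mX : MeasurableSpace X]
  [mY : MeasurableSpace Y] {μ : Measure X} {ν : Measure Y} {f g : X → ℝ} {C : ℝ}

lemma integral_mul_condExp [IsFiniteMeasure μ] (hm : m ≤ mX)
    (hgm : StronglyMeasurable[m] g) (hg : MemLp g 2 μ) (hf : MemLp f 2 μ) :
    ∫ x, g x * (μ[f | m]) x ∂μ = ∫ x, g x * f x ∂μ := by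
  have hpull : μ[g * f | m] =ᵐ[μ] g * μ[f | m] :=
    condExp_mul_of_stronglyMeasurable_left hgm (hg.integrable_mul hf) (hf.integrable one_le_two)
  calc ∫ x, g x * (μ[f | m]) x ∂μ = ∫ x, (μ[g * f | m]) x ∂μ := (integral_congr_ae hpull).symm
    _ = ∫ x, g x * f x ∂μ := integral_condExp hm

lemma exists_boundedMeasurable_condExp (hf : BoundedMeasurable f C) :
    ∃ g, @BoundedMeasurable X m g C ∧ g =ᵐ[μ] μ[f | m] := by
  have hq : Measurable[m] (μ[f | m]) := stronglyMeasurable_condExp.measurable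
  refine ⟨{x | |(μ[f | m]) x| ≤ C}.indicator (μ[f | m]),
    ⟨hq.indicator (hq (measurable_norm measurableSet_Iic)), fun x => ?_⟩, ?_⟩
  · by_cases hx : |(μ[f | m]) x| ≤ C
    · rwa [Set.indicator_of_mem (by exact hx)]
    · rw [Set.indicator_of_notMem (by exact hx), abs_zero]
      exact (abs_nonneg _).trans (hf.abs_le x)
  · filter_upwards [ae_bdd_abs_condExp_of_ae_bdd_abs (m := m) (μ := μ)
      (Eventually.of_forall hf.abs_le)] with x hx
    exact Set.indicator_of_mem (by exact hx) _

lemma condExp_invariants_comp_of_commute {T R : X → X} {b : X → ℝ} [IsFiniteMeasure μ]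
    (hT : MeasurePreserving T μ μ) (hR : MeasurePreserving R μ μ) (hc : Function.Commute R T)
    (hb : Integrable b μ) :
    μ[b ∘ R | MeasurableSpace.invariants T] =ᵐ[μ] μ[b | MeasurableSpace.invariants T] ∘ R := by
  filter_upwards [ae_tendsto_birkhoffAverage hT (hR.integrable_comp_of_integrable hb),
    hR.quasiMeasurePreserving.ae (ae_tendsto_birkhoffAverage hT hb)] with x hx hRx
  refine tendsto_nhds_unique hx (hRx.congr fun N => ?_)
  simp only [birkhoffAverage_eq_expect, Function.comp_apply, (hc.iterate_right _).eq]

lemma integral_sq_condExp_sub [IsFiniteMeasure μ] (hm : m ≤ mX) (hf : MemLp f 2 μ)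
    (hgm : StronglyMeasurable[m] g) (hg : MemLp g 2 μ)
    (hgf : ∫ x, g x * f x ∂μ = ∫ x, g x ^ 2 ∂μ) :
    ∫ x, (μ[f - g | m]) x ^ 2 ∂μ = ∫ x, (μ[f | m]) x ^ 2 ∂μ - ∫ x, g x ^ 2 ∂μ := by
  have hsub : μ[f - g | m] =ᵐ[μ] μ[f | m] - g := by
    refine (condExp_sub (hf.integrable one_le_two) (hg.integrable one_le_two) m).trans ?_
    rw [condExp_of_stronglyMeasurable hm hgm (hg.integrable one_le_two)]
  have hq : MemLp (μ[f | m]) 2 μ := hf.condExp one_le_two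
  have hprod : Integrable (fun x => 2 * (g x * (μ[f | m]) x)) μ :=
    (hg.integrable_mul hq).const_mul 2
  have hdiff : Integrable (fun x => (μ[f | m]) x ^ 2 - 2 * (g x * (μ[f | m]) x)) μ :=
    hq.integrable_sq.sub hprod
  calc ∫ x, (μ[f - g | m]) x ^ 2 ∂μ
      = ∫ x, ((μ[f | m]) x ^ 2 - 2 * (g x * (μ[f | m]) x) + g x ^ 2) ∂μ :=
        integral_congr_ae (hsub.mono fun x hx => by simp only [hx, Pi.sub_apply]; ring)
    _ = ∫ x, (μ[f | m]) x ^ 2 ∂μ - 2 * ∫ x, g x * (μ[f | m]) x ∂μ + ∫ x, g x ^ 2 ∂μ := by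
        rw [integral_add hdiff hg.integrable_sq,
          integral_sub hq.integrable_sq hprod, integral_const_mul]
    _ = ∫ x, (μ[f | m]) x ^ 2 ∂μ - ∫ x, g x ^ 2 ∂μ := by
        rw [integral_mul_condExp hm hgm hg hf, hgf]
        ring

lemma integral_sq_condExp_comp_sub [IsFiniteMeasure ν] [IsFiniteMeasure μ] {p : Y → X}
    (hp : MeasurePreserving p ν μ) (hm' : m' ≤ mY) (hm : m ≤ mX) (hpm : Measurable[m', m] p)
    (hf : MemLp f 2 μ) (hg : StronglyMeasurable[m] g) (hgf : g =ᵐ[μ] μ[f | m]) :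
    ∫ y, (ν[f ∘ p - g ∘ p | m']) y ^ 2 ∂ν
      = ∫ y, (ν[f ∘ p | m']) y ^ 2 ∂ν - ∫ x, (μ[f | m]) x ^ 2 ∂μ := by
  have hgL : MemLp g 2 μ := (hf.condExp one_le_two).ae_eq hgf.symm
  have hsq : ∫ y, (g ∘ p) y ^ 2 ∂ν = ∫ x, g x ^ 2 ∂μ :=
    integral_comp_of_measurePreserving hp hgL.integrable_sq.aestronglyMeasurable
  have hcross : ∫ y, (g ∘ p) y * (f ∘ p) y ∂ν = ∫ y, (g ∘ p) y ^ 2 ∂ν :=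
    calc ∫ y, g (p y) * f (p y) ∂ν = ∫ x, g x * f x ∂μ :=
          integral_comp_of_measurePreserving hp (hgL.integrable_mul hf).aestronglyMeasurable
      _ = ∫ x, g x * (μ[f | m]) x ∂μ := (integral_mul_condExp hm hg hgL hf).symm
      _ = ∫ x, g x ^ 2 ∂μ := integral_congr_ae (hgf.mono fun x hx => by simp only [← hx, sq])
      _ = ∫ y, g (p y) ^ 2 ∂ν := hsq.symm
  rw [integral_sq_condExp_sub hm' (hf.comp_measurePreserving hp) (hg.comp_measurable hpm)
    (hgL.comp_measurePreserving hp) hcross, hsq]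
  exact congrArg _ (integral_congr_ae (hgf.fun_comp (· ^ 2)))

end ConditionalExpectation

section RelativeProduct

variable {X : Type*} {m : MeasurableSpace X} [mX : MeasurableSpace X] [StandardBorelSpace X]
  {μ : Measure X} [IsProbabilityMeasure μ]

/-- The relatively independent self-joining `μ ×_m μ` of `μ` over the sub-σ-algebra `m`:
the second coordinate is drawn from the conditional law, given `m`, of the first one. -/
noncomputable def relProd (μ : Measure X) [IsProbabilityMeasure μ] (hm : m ≤ mX) :
    Measure (X × X) :=
  μ ⊗ₘ (condExpKernel μ m).comap id (measurable_id'' hm)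

instance (hm : m ≤ mX) : IsProbabilityMeasure (relProd μ hm) := by
  unfold relProd
  infer_instance

lemma integral_relProd (hm : m ≤ mX) {a b : X → ℝ} {C K : ℝ} (ha : BoundedMeasurable a C)
    (hb : BoundedMeasurable b K) :
    ∫ z, a z.1 * b z.2 ∂relProd μ hm = ∫ x, a x * (μ[b | m]) x ∂μ := by
  have hint : Integrable (fun z : X × X => a z.1 * b z.2) (relProd μ hm) :=
    ((ha.comp measurable_fst).mul (hb.comp measurable_snd)).integrable
  rw [relProd, Measure.integral_compProd hint]
  refine integral_congr_ae ?_
  filter_upwards [condExp_ae_eq_integral_condExpKernel hm (hb.integrable (μ := μ))] with x hx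
  rw [hx, integral_const_mul]
  rfl

lemma relProd_real_prod (hm : m ≤ mX) {A B : Set X} (hA : MeasurableSet A)
    (hB : MeasurableSet B) :
    (relProd μ hm).real (A ×ˢ B) = ∫ x in A, (μ⟦B | m⟧) x ∂μ := by
  calc (relProd μ hm).real (A ×ˢ B)
      = ∫ z, A.indicator 1 z.1 * B.indicator 1 z.2 ∂relProd μ hm := by
        rw [← integral_indicator_one (hA.prod hB)]
        exact integral_congr_ae (.of_forall fun z => Set.indicator_prod_one)
    _ = ∫ x, A.indicator 1 x * (μ⟦B | m⟧) x ∂μ := integral_relProd hm (.indicator_one hA)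
        (.indicator_one hB)
    _ = ∫ x in A, (μ⟦B | m⟧) x ∂μ := by
        rw [← integral_indicator hA]
        congr with x
        by_cases hx : x ∈ A <;> simp [hx]

lemma measurePreserving_prodMap_relProd (hm : m ≤ mX) {R₁ R₂ : X → X}
    (h₁ : MeasurePreserving R₁ μ μ) (h₂ : Measurable R₂)
    (H : ∀ B, MeasurableSet B → μ⟦R₂ ⁻¹' B | m⟧ =ᵐ[μ] μ⟦B | m⟧ ∘ R₁) :
    MeasurePreserving (Prod.map R₁ R₂) (relProd μ hm) (relProd μ hm) := by
  refine ⟨h₁.measurable.prodMap h₂, (Measure.ext_prod fun {A B} hA hB => ?_).symm⟩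
  rw [Measure.map_apply (h₁.measurable.prodMap h₂) (hA.prod hB), Set.preimage_prod_map_prod,
    ← measureReal_eq_measureReal_iff, eq_comm]
  calc (relProd μ hm).real ((R₁ ⁻¹' A) ×ˢ (R₂ ⁻¹' B)) = ∫ x in R₁ ⁻¹' A, (μ⟦R₂ ⁻¹' B | m⟧) x ∂μ :=
        relProd_real_prod hm (h₁.measurable hA) (h₂ hB)
    _ = ∫ x in R₁ ⁻¹' A, (μ⟦B | m⟧) (R₁ x) ∂μ := setIntegral_congr_ae (h₁.measurable hA)
        ((H B hB).mono fun x hx _ => hx)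
    _ = ∫ x in A, (μ⟦B | m⟧) x ∂μ := integral_comp_of_measurePreserving
        (h₁.restrict_preimage hA) integrable_condExp.aestronglyMeasurable.restrict
    _ = (relProd μ hm).real (A ×ˢ B) := (relProd_real_prod hm hA hB).symm

lemma measurePreserving_snd_relProd (hm : m ≤ mX) :
    MeasurePreserving Prod.snd (relProd μ hm) μ := by
  refine ⟨measurable_snd, Measure.ext fun B hB => ?_⟩
  rw [Measure.map_apply measurable_snd hB, ← measureReal_eq_measureReal_iff, ← Set.univ_prod,
    relProd_real_prod hm MeasurableSet.univ hB, setIntegral_univ, integral_condExp hm,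
    integral_indicator_const 1 hB, smul_eq_mul, mul_one]

lemma IsCommutingSystem.relProd {S T : X → X} (h : IsCommutingSystem μ S T) :
    IsCommutingSystem (CubicAverage.relProd μ (MeasurableSpace.invariants_le T))
      (Prod.map S S) (Prod.map id T) where
  left := measurePreserving_prodMap_relProd _ h.left h.left.measurable fun B hB =>
    condExp_invariants_comp_of_commute h.right h.left h.commute
      ((integrable_const (1 : ℝ)).indicator hB)
  right := measurePreserving_prodMap_relProd _ (.id μ) h.right.measurable fun B hB => by
    refine (condExp_invariants_comp_of_commute h.right h.right (.refl T)
      ((integrable_const (1 : ℝ)).indicator hB)).trans ?_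
    rw [condExp_invariants_comp (T := T)]
    rfl
  commute z := Prod.ext rfl (h.commute z.2)

end RelativeProduct

section BoxSeminorm

variable {X : Type*} [mX : MeasurableSpace X] {μ : Measure X} [IsProbabilityMeasure μ]
  {S T : X → X} {f f1 f2 f3 : X → ℝ} {C K : ℝ}

/-- The σ-algebra `I_S ∨ I_T` generated by the `S`-invariant and the `T`-invariant sets. The
structured part of a function `f` is `𝔼(f | I_S ∨ I_T)`. -/
abbrev invariantsSup (S T : X → X) : MeasurableSpace X :=
  MeasurableSpace.invariants S ⊔ MeasurableSpace.invariants T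

lemma invariantsSup_le (S T : X → X) : invariantsSup S T ≤ mX :=
  sup_le (MeasurableSpace.invariants_le S) (MeasurableSpace.invariants_le T)

/-- The energy `‖𝔼(f | I_S ∨ I_T)‖²` of `f`, the quantity that increases along extensions. -/
noncomputable def energy (μ : Measure X) (S T : X → X) (f : X → ℝ) : ℝ :=
  ∫ x, (μ[f | invariantsSup S T]) x ^ 2 ∂μ

/-- The function `f ⊗ f` on the square of a space. -/
def tensorSquare (f : X → ℝ) (z : X × X) : ℝ := f z.1 * f z.2

/-- The fourth power of the box seminorm of `f`: the squared norm of the projection of `f ⊗ f`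
onto the functions on `μ ×_{I_T} μ` invariant under `S × S`. -/
noncomputable def boxPowFour [StandardBorelSpace X] (μ : Measure X) [IsProbabilityMeasure μ]
    (S T : X → X) (f : X → ℝ) : ℝ :=
  let ν := relProd μ (MeasurableSpace.invariants_le T)
  ∫ z, (ν[tensorSquare f | MeasurableSpace.invariants (Prod.map S S)]) z ^ 2 ∂ν

lemma BoundedMeasurable.tensorSquare (hf : BoundedMeasurable f C) :
    BoundedMeasurable (tensorSquare f) (C * C) :=
  (hf.comp measurable_fst).mul (hf.comp measurable_snd)

theorem tendsto_expect_expect_integral_mul_iterate (hS : MeasurePreserving S μ μ)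
    (hf : BoundedMeasurable f C) :
    Tendsto (fun H => 𝔼 k ∈ range H, 𝔼 k' ∈ range H, ∫ x, f (S^[k] x) * f (S^[k'] x) ∂μ) atTop
      (𝓝 (∫ x, (μ[f | MeasurableSpace.invariants S]) x ^ 2 ∂μ)) := by
  have hiter (k : ℕ) : BoundedMeasurable (fun x => f (S^[k] x)) C :=
    hf.comp (hS.measurable.iterate k)
  have hmul (k k' : ℕ) : Integrable (fun x => f (S^[k] x) * f (S^[k'] x)) μ :=
    ((hiter k).mul (hiter k')).integrable
  have havg (H : ℕ) : BoundedMeasurable (fun x => 𝔼 k ∈ range H, f (S^[k] x)) C :=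
    .expect hiter (hf.nonneg (μ := μ))
  have hsq (H : ℕ) : ∫ x, (𝔼 k ∈ range H, f (S^[k] x)) ^ 2 ∂μ
      = 𝔼 k ∈ range H, 𝔼 k' ∈ range H, ∫ x, f (S^[k] x) * f (S^[k'] x) ∂μ := by
    simp only [sq, expect_mul_expect]
    rw [integral_expect fun k _ => integrable_expect fun k' _ => hmul k k']
    simp only [integral_expect fun k' _ => hmul _ k']
  simp only [← hsq]
  refine tendsto_integral_of_dominated_convergence (fun _ => C ^ 2)
    (fun H => ((havg H).measurable.pow_const 2).aestronglyMeasurable) (integrable_const _)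
    (fun H => .of_forall fun x => ?_) ?_
  · simpa only [Real.norm_eq_abs, abs_pow] using pow_le_pow_left₀ (abs_nonneg _)
      ((havg H).abs_le x) 2
  · filter_upwards [ae_tendsto_birkhoffAverage hS hf.integrable] with x hx
    simpa only [birkhoffAverage_eq_expect] using hx.pow 2

variable [StandardBorelSpace X]

lemma integral_condCorrelation_sq (h : IsCommutingSystem μ S T) (hf : BoundedMeasurable f C)
    (k k' : ℕ) :
    ∫ x, condCorrelation μ S T f k k' x ^ 2 ∂μ
      = ∫ z, tensorSquare f ((Prod.map S S)^[k] z) * tensorSquare f ((Prod.map S S)^[k'] z)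
          ∂relProd μ (MeasurableSpace.invariants_le T) := by
  have hg : BoundedMeasurable (fun x => f (S^[k] x) * f (S^[k'] x)) (C * C) :=
    hf.mul_iterate h.left.measurable k k'
  have hproj := integral_mul_condExp (MeasurableSpace.invariants_le T)
    stronglyMeasurable_condExp ((hg.memLp (μ := μ) 2).condExp one_le_two) (hg.memLp 2)
  calc ∫ x, condCorrelation μ S T f k k' x ^ 2 ∂μ
      = ∫ x, (f (S^[k] x) * f (S^[k'] x)) * condCorrelation μ S T f k k' x ∂μ := by
        simpa only [sq, condCorrelation, mul_comm (f _ * f _)] using hproj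
    _ = ∫ z, (f (S^[k] z.1) * f (S^[k'] z.1)) * (f (S^[k] z.2) * f (S^[k'] z.2))
          ∂relProd μ (MeasurableSpace.invariants_le T) := (integral_relProd _ hg hg).symm
    _ = _ := by
        simp only [tensorSquare, Prod.map_iterate, Prod.map_fst, Prod.map_snd, mul_mul_mul_comm]

theorem lintegral_osc_cubicAverage_pow_four_le_boxPowFour (h : IsCommutingSystem μ S T)
    (h1 : BoundedMeasurable f1 C) (h2 : BoundedMeasurable f2 C) (h3 : BoundedMeasurable f3 K) :
    (∫⁻ x, osc (cubicAverage S T f1 f2 f3 · x) ∂μ) ^ 4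
      ≤ ENNReal.ofReal (16 * C ^ 8 * boxPowFour μ S T f3) := by
  have hlim := tendsto_expect_expect_integral_mul_iterate h.relProd.left h3.tensorSquare
  simp only [← integral_condCorrelation_sq h h3] at hlim
  refine ge_of_tendsto (ENNReal.tendsto_ofReal (hlim.const_mul (16 * C ^ 8))) ?_
  filter_upwards [eventually_ne_atTop 0] with H hH
  exact lintegral_osc_cubicAverage_pow_four_le h h1 h2 h3 hH

/-- The `S × S`-invariant function `Φ = 𝔼(f ⊗ f | S × S)` times the `id × T`-invariant function
`f ∘ fst` is measurable with respect to `I_{S × S} ∨ I_{id × T}`, so in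
`∫ Φ² = ∫ Φ · f ∘ fst · f ∘ snd` the last factor may be projected onto that σ-algebra. -/
lemma exists_boxPowFour_eq_integral_mul (hf : BoundedMeasurable f C) :
    ∃ w : X × X → ℝ, BoundedMeasurable w (C ^ 3) ∧
      boxPowFour μ S T f = ∫ z, w z *
        ((relProd μ (MeasurableSpace.invariants_le T))[f ∘ Prod.snd |
          invariantsSup (Prod.map S S) (Prod.map id T)]) z
        ∂relProd μ (MeasurableSpace.invariants_le T) := by
  set ν := relProd μ (MeasurableSpace.invariants_le T)
  have hle := invariantsSup_le (Prod.map S S) (Prod.map id T)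
  obtain ⟨Φ, hΦ, hΦeq⟩ := exists_boundedMeasurable_condExp (μ := ν)
    (m := MeasurableSpace.invariants (Prod.map S S)) hf.tensorSquare
  have hfst : @BoundedMeasurable _ (MeasurableSpace.invariants (Prod.map id T))
      (f ∘ Prod.fst) C :=
    ⟨MeasurableSpace.measurable_invariants_dom.2
      ⟨hf.measurable.comp measurable_fst, fun _ _ => rfl⟩, fun z => hf.abs_le z.1⟩
  have hw : @BoundedMeasurable _ (invariantsSup (Prod.map S S) (Prod.map id T))
      (fun z => Φ z * f z.1) (C ^ 3) :=
    pow_three' C ▸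
      .mul (hΦ.mono (mX := invariantsSup (Prod.map S S) (Prod.map id T)) le_sup_left)
        (hfst.mono (mX := invariantsSup (Prod.map S S) (Prod.map id T)) le_sup_right)
  refine ⟨_, hw.mono hle, ?_⟩
  calc boxPowFour μ S T f
      = ∫ z, Φ z * (ν[tensorSquare f | MeasurableSpace.invariants (Prod.map S S)]) z ∂ν :=
        integral_congr_ae (hΦeq.mono fun z hz => (sq _).trans (congrArg (· * _) hz.symm))
    _ = ∫ z, Φ z * tensorSquare f z ∂ν := integral_mul_condExp (MeasurableSpace.invariants_le _)
        hΦ.measurable.stronglyMeasurable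
        ((hΦ.mono (MeasurableSpace.invariants_le _)).memLp 2) (hf.tensorSquare.memLp 2)
    _ = ∫ z, (Φ z * f z.1) * f z.2 ∂ν := by simp only [tensorSquare, mul_assoc]
    _ = _ := (integral_mul_condExp hle hw.measurable.stronglyMeasurable
        ((hw.mono hle).memLp 2) ((hf.comp measurable_snd).memLp 2)).symm

lemma sq_boxPowFour_le (hf : BoundedMeasurable f C) :
    boxPowFour μ S T f ^ 2 ≤ C ^ 6 *
      energy (relProd μ (MeasurableSpace.invariants_le T)) (Prod.map S S) (Prod.map id T)
        (f ∘ Prod.snd) := by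
  obtain ⟨w, hw, hbox⟩ := exists_boxPowFour_eq_integral_mul (μ := μ) (S := S) (T := T) hf
  rw [hbox, show C ^ 6 = (C ^ 3) ^ 2 from pow_mul C 3 2]
  exact sq_integral_mul_le hw (((hf.comp measurable_snd).memLp 2).condExp one_le_two)

theorem lintegral_osc_cubicAverage_pow_eight_le (h : IsCommutingSystem μ S T)
    (h1 : BoundedMeasurable f1 C) (h2 : BoundedMeasurable f2 C) (h3 : BoundedMeasurable f3 K) :
    (∫⁻ x, osc (cubicAverage S T f1 f2 f3 · x) ∂μ) ^ 8 ≤ ENNReal.ofReal (256 * C ^ 16 * K ^ 6 *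
      energy (relProd μ (MeasurableSpace.invariants_le T)) (Prod.map S S) (Prod.map id T)
        (f3 ∘ Prod.snd)) := by
  have hbox : 0 ≤ boxPowFour μ S T f3 := integral_nonneg fun z => sq_nonneg _
  calc (∫⁻ x, osc (cubicAverage S T f1 f2 f3 · x) ∂μ) ^ 8
      ≤ ENNReal.ofReal (16 * C ^ 8 * boxPowFour μ S T f3) ^ 2 := by
        rw [show 8 = 4 * 2 from rfl, pow_mul]
        gcongr
        exact lintegral_osc_cubicAverage_pow_four_le_boxPowFour h h1 h2 h3
    _ = ENNReal.ofReal (256 * C ^ 16 * boxPowFour μ S T f3 ^ 2) := by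
        rw [← ENNReal.ofReal_pow (by positivity)]
        ring_nf
    _ ≤ _ := by
        rw [mul_assoc _ (K ^ 6)]
        gcongr
        exact sq_boxPowFour_le h3

end BoxSeminorm

section MonotoneClass

variable {X : Type*}

lemma sup_eq_generateFrom_image2_inter (m₁ m₂ : MeasurableSpace X) :
    m₁ ⊔ m₂ = MeasurableSpace.generateFrom
      (Set.image2 (· ∩ ·) {A | MeasurableSet[m₁] A} {B | MeasurableSet[m₂] B}) := by
  refine le_antisymm (sup_le (fun A hA => ?_) fun B hB => ?_) (MeasurableSpace.generateFrom_le ?_)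
  · exact MeasurableSpace.measurableSet_generateFrom ⟨A, hA, .univ, .univ, Set.inter_univ A⟩
  · exact MeasurableSpace.measurableSet_generateFrom ⟨.univ, .univ, B, hB, Set.univ_inter B⟩
  · rintro _ ⟨A, hA, B, hB, rfl⟩
    exact .inter (le_sup_left (a := m₁) (b := m₂) A hA) (le_sup_right (a := m₁) (b := m₂) B hB)

lemma isPiSystem_image2_inter (m₁ m₂ : MeasurableSpace X) : IsPiSystem
    (Set.image2 (· ∩ ·) {A | MeasurableSet[m₁] A} {B | MeasurableSet[m₂] B}) := by
  rintro _ ⟨A, hA, B, hB, rfl⟩ _ ⟨A', hA', B', hB', rfl⟩ _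
  exact ⟨A ∩ A', .inter hA hA', B ∩ B', .inter hB hB', Set.inter_inter_inter_comm A A' B B'⟩

variable {m : MeasurableSpace X} {Q : (X → ℝ) → Prop} {C : ℝ}

/-- `Q` is a linear class of real functions containing the constants and closed under bounded
pointwise limits of measurable functions: the classes of the functional monotone class theorem. -/
structure IsMonotoneClass {X : Type*} [MeasurableSpace X] (Q : (X → ℝ) → Prop) : Prop where
  one : Q 1
  add {f g : X → ℝ} : Q f → Q g → Q (f + g)
  const_smul {f : X → ℝ} (c : ℝ) : Q f → Q (c • f)
  of_tendsto {F : ℕ → X → ℝ} {f : X → ℝ} {C : ℝ} : (∀ n, BoundedMeasurable (F n) C) →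
    (∀ n, Q (F n)) → (∀ x, Tendsto (F · x) atTop (𝓝 (f x))) → Q f

namespace IsMonotoneClass

lemma anti {mX : MeasurableSpace X} (hm : m ≤ mX) (hQ : @IsMonotoneClass X mX Q) :
    @IsMonotoneClass X m Q :=
  @IsMonotoneClass.mk X m Q hQ.one hQ.add hQ.const_smul
    fun hF hQF hlim => hQ.of_tendsto (fun n => (hF n).mono hm) hQF hlim

lemma indicator (hQ : IsMonotoneClass Q) {π : Set (Set X)} (hm : m = .generateFrom π)
    (hπ : IsPiSystem π) (hind : ∀ A ∈ π, Q (A.indicator 1)) {A : Set X} (hA : MeasurableSet A) :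
    Q (A.indicator 1) := by
  have hzero : Q 0 := by simpa only [zero_smul] using hQ.const_smul 0 hQ.one
  induction A, hA using MeasurableSpace.induction_on_inter hm hπ with
  | empty => exact (Set.indicator_empty (1 : X → ℝ)).symm ▸ hzero
  | basic A hA => exact hind A hA
  | compl A _ ih =>
    have hcompl : Aᶜ.indicator 1 = (1 : X → ℝ) + (-1 : ℝ) • A.indicator 1 := by
      rw [Set.indicator_compl, neg_one_smul, ← sub_eq_add_neg]
    exact hcompl ▸ hQ.add hQ.one (hQ.const_smul _ ih)
  | iUnion A hdisj hA ih =>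
    have hsum (n : ℕ) : (⋃ i ∈ range n, A i).indicator (1 : X → ℝ)
        = ∑ i ∈ range n, (A i).indicator 1 :=
      funext fun x => by
        rw [Finset.indicator_biUnion _ _ fun i _ j _ hij => hdisj hij, Finset.sum_apply]
    refine hQ.of_tendsto (F := fun n => (⋃ i ∈ range n, A i).indicator 1) (C := 1)
      (fun n => .indicator_one (measurableSet_biUnion _ fun i _ => hA i))
      (fun n => ?_) fun x => ?_
    · rw [hsum]
      exact Finset.sum_induction _ _ (fun _ _ => hQ.add) hzero fun i _ => ih i
    · exact ((tendsto_indicator_biUnion_finset A 1 x).mono_right (pure_le_nhds _)).comp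
        tendsto_finset_range

theorem of_boundedMeasurable (hQ : IsMonotoneClass Q) {π : Set (Set X)} (hm : m = .generateFrom π)
    (hπ : IsPiSystem π) (hind : ∀ A ∈ π, Q (A.indicator 1)) {f : X → ℝ}
    (hf : BoundedMeasurable f C) (hC : 0 ≤ C) : Q f := by
  have hsimple (g : SimpleFunc X ℝ) : Q g := by
    induction g using SimpleFunc.induction with
    | @const c A hA =>
      have hconst : ⇑(SimpleFunc.piecewise A hA (.const X c) (.const X 0))
          = c • A.indicator (1 : X → ℝ) :=
        funext fun x => by by_cases hx : x ∈ A <;> simp [hx]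
      exact hconst ▸ hQ.const_smul c (hQ.indicator hm hπ hind hA)
    | add _ hf hg => exact hQ.add hf hg
  have hfm := hf.measurable.stronglyMeasurable
  exact hQ.of_tendsto (F := fun n => hfm.approxBounded C n)
    (fun n => ⟨SimpleFunc.measurable _, hfm.norm_approxBounded_le hC n⟩) (fun n => hsimple _)
    fun x => hfm.tendsto_approxBounded_of_norm_le (hf.abs_le x)

end IsMonotoneClass

end MonotoneClass

section StructuredPart

variable {X : Type*} [mX : MeasurableSpace X] {μ : Measure X} {S T : X → X}
  {f1 f2 f3 u v : X → ℝ} {C K L : ℝ}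

lemma comp_iterate_eq_of_measurable_invariants {R : X → X}
    (hu : Measurable[MeasurableSpace.invariants R] u) (n : ℕ) (x : X) : u (R^[n] x) = u x :=
  congrFun (MeasurableSpace.comp_eq_of_measurable_invariants
    (hu.mono (MeasurableSpace.le_invariants_iterate R n) le_rfl)) x

lemma lintegral_osc_cubicAverage_eq_zero_iff (h : IsCommutingSystem μ S T) (h1 : Measurable f1)
    (h2 : Measurable f2) (h3 : Measurable f3) :
    ∫⁻ x, osc (cubicAverage S T f1 f2 f3 · x) ∂μ = 0 ↔
      ∀ᵐ x ∂μ, ∃ L, Tendsto (cubicAverage S T f1 f2 f3 · x) atTop (𝓝 L) := by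
  rw [lintegral_eq_zero_iff (measurable_osc (h.measurable_cubicAverage h1 h2 h3))]
  exact eventually_congr (.of_forall fun x => osc_eq_zero_iff_exists_tendsto)

lemma lintegral_osc_cubicAverage_le_add (h : IsCommutingSystem μ S T) (h1 : Measurable f1)
    (h2 : Measurable f2) {g : X → ℝ} (hg : Measurable g) :
    ∫⁻ x, osc (cubicAverage S T f1 f2 f3 · x) ∂μ
      ≤ ∫⁻ x, osc (cubicAverage S T f1 f2 g · x) ∂μ
        + ∫⁻ x, osc (cubicAverage S T f1 f2 (f3 - g) · x) ∂μ := by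
  rw [← lintegral_add_left (measurable_osc (h.measurable_cubicAverage h1 h2 hg))]
  refine lintegral_mono fun x => ?_
  have hadd : (cubicAverage S T f1 f2 f3 · x)
      = (cubicAverage S T f1 f2 g · x) + (cubicAverage S T f1 f2 (f3 - g) · x) :=
    funext fun N => by rw [Pi.add_apply, ← cubicAverage_add, add_sub_cancel]
  exact hadd ▸ osc_add_le _ _

variable [IsFiniteMeasure μ]

/-- The average splits as the product of a Birkhoff average of `f1 * v` along `S` and one of
`f2 * u` along `T`. -/
lemma ae_exists_tendsto_cubicAverage_mul (h : IsCommutingSystem μ S T)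
    (h1 : BoundedMeasurable f1 C) (h2 : BoundedMeasurable f2 C)
    (hu : @BoundedMeasurable X (MeasurableSpace.invariants S) u K)
    (hv : @BoundedMeasurable X (MeasurableSpace.invariants T) v L) :
    ∀ᵐ x ∂μ, ∃ L, Tendsto (cubicAverage S T f1 f2 (u * v) · x) atTop (𝓝 L) := by
  filter_upwards [ae_tendsto_birkhoffAverage h.left
      (h1.mul (hv.mono (MeasurableSpace.invariants_le T))).integrable,
    ae_tendsto_birkhoffAverage h.right
      (h2.mul (hu.mono (MeasurableSpace.invariants_le S))).integrable] with x hx1 hx2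
  refine ⟨_, (hx1.mul hx2).congr fun N => ?_⟩
  simp only [birkhoffAverage_eq_expect, expect_mul_expect, cubicAverage]
  refine expect_congr rfl fun i _ => expect_congr rfl fun j _ => ?_
  rw [Pi.mul_apply, comp_iterate_eq_of_measurable_invariants hu.measurable, h.iterate_comm,
    comp_iterate_eq_of_measurable_invariants hv.measurable]
  ring

lemma ae_exists_tendsto_cubicAverage_of_tendsto (h : IsCommutingSystem μ S T)
    (h1 : BoundedMeasurable f1 C) (h2 : BoundedMeasurable f2 C) {F : ℕ → X → ℝ}
    (hF : ∀ n, BoundedMeasurable (F n) K)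
    (hconv : ∀ n, ∀ᵐ x ∂μ, ∃ L, Tendsto (cubicAverage S T f1 f2 (F n) · x) atTop (𝓝 L))
    (hlim : ∀ x, Tendsto (F · x) atTop (𝓝 (f3 x))) :
    ∀ᵐ x ∂μ, ∃ L, Tendsto (cubicAverage S T f1 f2 f3 · x) atTop (𝓝 L) := by
  have h3 : BoundedMeasurable f3 K := ⟨measurable_of_tendsto_metrizable
    (fun n => (hF n).measurable) (tendsto_pi_nhds.2 hlim),
    fun x => le_of_tendsto (hlim x).abs (.of_forall fun n => (hF n).abs_le x)⟩
  have hle (n : ℕ) : ∫⁻ x, osc (cubicAverage S T f1 f2 f3 · x) ∂μ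
      ≤ ENNReal.ofReal (2 * (C ^ 2 * ∫ x, |f3 x - F n x| ∂μ)) := by
    refine (lintegral_osc_cubicAverage_le_add h h1.measurable h2.measurable
      (hF n).measurable).trans ?_
    rw [(lintegral_osc_cubicAverage_eq_zero_iff h h1.measurable h2.measurable
      (hF n).measurable).2 (hconv n), zero_add]
    exact lintegral_osc_cubicAverage_le h h1 h2 (h3.sub (hF n))
  have hL1 : Tendsto (fun n => ∫ x, |f3 x - F n x| ∂μ) atTop (𝓝 (∫ _, 0 ∂μ)) :=
    tendsto_integral_of_dominated_convergence (fun _ => K + K)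
      (fun n => (h3.sub (hF n)).abs.measurable.aestronglyMeasurable) (integrable_const _)
      (fun n => .of_forall (h3.sub (hF n)).abs.abs_le)
      (.of_forall fun x => by simpa only [sub_self, abs_zero] using ((hlim x).const_sub (f3 x)).abs)
  rw [← lintegral_osc_cubicAverage_eq_zero_iff h h1.measurable h2.measurable h3.measurable,
    ← nonpos_iff_eq_zero]
  have hbound := ENNReal.tendsto_ofReal ((hL1.const_mul (C ^ 2)).const_mul 2)
  simp only [integral_zero, mul_zero, ENNReal.ofReal_zero] at hbound
  exact ge_of_tendsto' hbound hle

lemma isMonotoneClass_ae_exists_tendsto_cubicAverage (h : IsCommutingSystem μ S T)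
    (h1 : BoundedMeasurable f1 C) (h2 : BoundedMeasurable f2 C) :
    IsMonotoneClass fun g => ∀ᵐ x ∂μ, ∃ L, Tendsto (cubicAverage S T f1 f2 g · x) atTop (𝓝 L) where
  one := by
    simpa only [mul_one] using ae_exists_tendsto_cubicAverage_mul (u := 1) (v := 1) h h1 h2
      ⟨measurable_const, fun _ => abs_one.le⟩ ⟨measurable_const, fun _ => abs_one.le⟩
  add {f g} hf hg := by
    filter_upwards [hf, hg] with x ⟨L, hL⟩ ⟨L', hL'⟩
    exact ⟨L + L', by simpa only [cubicAverage_add] using hL.add hL'⟩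
  const_smul {f} c hf := by
    filter_upwards [hf] with x ⟨L, hL⟩
    exact ⟨c * L, by simpa only [cubicAverage_const_smul] using hL.const_mul c⟩
  of_tendsto := ae_exists_tendsto_cubicAverage_of_tendsto h h1 h2

theorem ae_exists_tendsto_cubicAverage_of_invariantsSup (h : IsCommutingSystem μ S T)
    (h1 : BoundedMeasurable f1 C) (h2 : BoundedMeasurable f2 C)
    (h3 : @BoundedMeasurable X (invariantsSup S T) f3 K) :
    ∀ᵐ x ∂μ, ∃ L, Tendsto (cubicAverage S T f1 f2 f3 · x) atTop (𝓝 L) := by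
  rcases eq_zero_or_neZero μ with rfl | hμ
  · simp
  have hQ := isMonotoneClass_ae_exists_tendsto_cubicAverage h h1 h2
  have hinter : ∀ E ∈ Set.image2 (· ∩ ·) {A | MeasurableSet[MeasurableSpace.invariants S] A}
      {B | MeasurableSet[MeasurableSpace.invariants T] B},
      ∀ᵐ x ∂μ, ∃ L, Tendsto (cubicAverage S T f1 f2 (E.indicator 1) · x) atTop (𝓝 L) := by
    rintro _ ⟨A, hA, B, hB, rfl⟩
    simpa only [Set.inter_indicator_one] using ae_exists_tendsto_cubicAverage_mul h h1 h2
      (BoundedMeasurable.indicator_one hA) (BoundedMeasurable.indicator_one hB)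
  exact (hQ.anti (invariantsSup_le S T)).of_boundedMeasurable (sup_eq_generateFrom_image2_inter _ _)
    (isPiSystem_image2_inter _ _) hinter h3 ((h3.mono (invariantsSup_le S T)).nonneg (μ := μ))

end StructuredPart

section FactorMap

variable {X Y Z : Type*} [MeasurableSpace X] [MeasurableSpace Y] [MeasurableSpace Z]
  {μ : Measure X} {ν : Measure Y} {ρ : Measure Z} {S T : X → X} {S' T' : Y → Y} {S'' T'' : Z → Z}
  {p : Y → X} {q : Z → Y} {f1 f2 f3 : X → ℝ}

/-- `p` is a factor map from the system `(Y, ν, S', T')` to the system `(X, μ, S, T)`; equivalently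
`(Y, ν, S', T')` is an extension of `(X, μ, S, T)`. -/
structure IsFactorMap (p : Y → X) (ν : Measure Y) (S' T' : Y → Y) (μ : Measure X) (S T : X → X) :
    Prop where
  measurePreserving : MeasurePreserving p ν μ
  left : Function.Semiconj p S' S
  right : Function.Semiconj p T' T

namespace IsFactorMap

lemma comp (hp : IsFactorMap p ν S' T' μ S T) (hq : IsFactorMap q ρ S'' T'' ν S' T') :
    IsFactorMap (p ∘ q) ρ S'' T'' μ S T where
  measurePreserving := hp.measurePreserving.comp hq.measurePreserving
  left := hp.left.comp_left hq.left
  right := hp.right.comp_left hq.right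

lemma measurable_invariantsSup (hp : IsFactorMap p ν S' T' μ S T) :
    Measurable[invariantsSup S' T', invariantsSup S T] p := by
  have hpm := hp.measurePreserving.measurable
  rw [measurable_iff_comap_le, MeasurableSpace.comap_sup]
  exact sup_le_sup
    (MeasurableSpace.measurable_invariants_of_semiconj hpm hp.left).comap_le
    (MeasurableSpace.measurable_invariants_of_semiconj hpm hp.right).comap_le

lemma cubicAverage_comp (hp : IsFactorMap p ν S' T' μ S T) (N : ℕ) (y : Y) :
    cubicAverage S' T' (f1 ∘ p) (f2 ∘ p) (f3 ∘ p) N y = cubicAverage S T f1 f2 f3 N (p y) := by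
  simp only [cubicAverage, Function.comp_apply, (hp.left.iterate_right _).eq,
    (hp.right.iterate_right _).eq]

lemma lintegral_osc_cubicAverage_comp (hp : IsFactorMap p ν S' T' μ S T)
    (h : IsCommutingSystem μ S T) (h1 : Measurable f1) (h2 : Measurable f2) (h3 : Measurable f3) :
    ∫⁻ y, osc (cubicAverage S' T' (f1 ∘ p) (f2 ∘ p) (f3 ∘ p) · y) ∂ν
      = ∫⁻ x, osc (cubicAverage S T f1 f2 f3 · x) ∂μ := by
  simp only [hp.cubicAverage_comp]
  exact hp.measurePreserving.lintegral_comp (measurable_osc (h.measurable_cubicAverage h1 h2 h3))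

end IsFactorMap

lemma isFactorMap_snd_relProd [StandardBorelSpace X] [IsProbabilityMeasure μ] :
    IsFactorMap Prod.snd (relProd μ (MeasurableSpace.invariants_le T)) (Prod.map S S)
      (Prod.map id T) μ S T where
  measurePreserving := measurePreserving_snd_relProd _
  left _ := rfl
  right _ := rfl

end FactorMap

section EnergyIncrement

universe u

variable {X : Type u} [mX : MeasurableSpace X] {μ : Measure X} {S T : X → X}
  {f f1 f2 f3 : X → ℝ} {C K : ℝ}

/-- The energies of the lifts of `f` to the standard Borel extensions of `(X, μ, S, T)`. -/
def extensionEnergies (μ : Measure X) (S T : X → X) (f : X → ℝ) : Set ℝ :=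
  {e | ∃ (Z : Type u) (_ : MeasurableSpace Z) (_ : StandardBorelSpace Z) (ν : Measure Z)
    (_ : IsProbabilityMeasure ν) (S' T' : Z → Z) (p : Z → X), IsCommutingSystem ν S' T' ∧
    IsFactorMap p ν S' T' μ S T ∧ e = energy ν S' T' (f ∘ p)}

lemma energy_le_sq [IsProbabilityMeasure μ] (hf : BoundedMeasurable f K) :
    energy μ S T f ≤ K ^ 2 := by
  obtain ⟨g, hg, hgf⟩ := exists_boundedMeasurable_condExp (μ := μ) (m := invariantsSup S T) hf
  have hgX := hg.mono (invariantsSup_le S T)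
  calc energy μ S T f = ∫ x, g x ^ 2 ∂μ :=
        integral_congr_ae (hgf.mono fun x hx => congrArg (· ^ 2) hx.symm)
    _ ≤ ∫ _, K ^ 2 ∂μ := integral_mono (hgX.memLp 2).integrable_sq (integrable_const _)
        fun x => sq_le_sq' (abs_le.1 (hgX.abs_le x)).1 (abs_le.1 (hgX.abs_le x)).2
    _ = K ^ 2 := by simp only [integral_const, probReal_univ, one_smul]

lemma bddAbove_extensionEnergies (hf : BoundedMeasurable f K) :
    BddAbove (extensionEnergies μ S T f) := by
  refine ⟨K ^ 2, ?_⟩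
  rintro _ ⟨Z, _, _, ν, _, S', T', p, -, hp, rfl⟩
  exact energy_le_sq (hf.comp hp.measurePreserving.measurable)

variable [IsProbabilityMeasure μ] [StandardBorelSpace X]

/-- Only the part of `f3` orthogonal to `I_S ∨ I_T` contributes to the oscillation, and the energy
that this part acquires in the extension is the energy that `f3` gains there. -/
theorem lintegral_osc_cubicAverage_pow_eight_le_energy_sub (h : IsCommutingSystem μ S T)
    (h1 : BoundedMeasurable f1 C) (h2 : BoundedMeasurable f2 C) (h3 : BoundedMeasurable f3 K) :
    (∫⁻ x, osc (cubicAverage S T f1 f2 f3 · x) ∂μ) ^ 8 ≤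
      ENNReal.ofReal (256 * C ^ 16 * (K + K) ^ 6 *
        (energy (relProd μ (MeasurableSpace.invariants_le T)) (Prod.map S S) (Prod.map id T)
          (f3 ∘ Prod.snd) - energy μ S T f3)) := by
  obtain ⟨P, hP, hPeq⟩ := exists_boundedMeasurable_condExp (μ := μ) (m := invariantsSup S T) h3
  have hPX := hP.mono (invariantsSup_le S T)
  have hP0 := (lintegral_osc_cubicAverage_eq_zero_iff h h1.measurable h2.measurable
    hPX.measurable).2 (ae_exists_tendsto_cubicAverage_of_invariantsSup h h1 h2 hP)
  have hle := lintegral_osc_cubicAverage_le_add (f3 := f3) h h1.measurable h2.measurable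
    hPX.measurable
  rw [hP0, zero_add] at hle
  have hsnd := isFactorMap_snd_relProd (μ := μ) (S := S) (T := T)
  have henergy := integral_sq_condExp_comp_sub hsnd.measurePreserving (invariantsSup_le _ _)
    (invariantsSup_le S T) hsnd.measurable_invariantsSup (h3.memLp 2)
    hP.measurable.stronglyMeasurable hPeq
  calc (∫⁻ x, osc (cubicAverage S T f1 f2 f3 · x) ∂μ) ^ 8
      ≤ (∫⁻ x, osc (cubicAverage S T f1 f2 (f3 - P) · x) ∂μ) ^ 8 := pow_le_pow_left' hle 8
    _ ≤ _ := lintegral_osc_cubicAverage_pow_eight_le h h1 h2 (h3.sub hPX)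
    _ = _ := congrArg (fun e => ENNReal.ofReal (256 * C ^ 16 * (K + K) ^ 6 * e)) henergy

lemma extensionEnergies_nonempty (h : IsCommutingSystem μ S T) :
    (extensionEnergies μ S T f).Nonempty :=
  ⟨_, X, mX, inferInstance, μ, inferInstance, S, T, id, h,
    ⟨.id μ, fun _ => rfl, fun _ => rfl⟩, rfl⟩

/-- An extension whose energy is within `ε` of the supremum gains at most `ε` in its relative
square. -/
lemma lintegral_osc_cubicAverage_pow_eight_le_of_pos (h : IsCommutingSystem μ S T)
    (h1 : BoundedMeasurable f1 C) (h2 : BoundedMeasurable f2 C) (h3 : BoundedMeasurable f3 K)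
    {ε : ℝ} (hε : 0 < ε) :
    (∫⁻ x, osc (cubicAverage S T f1 f2 f3 · x) ∂μ) ^ 8
      ≤ ENNReal.ofReal (256 * C ^ 16 * (K + K) ^ 6 * ε) := by
  obtain ⟨_, ⟨Z, _, _, ν, _, S', T', p, hZ, hp, rfl⟩, hsup⟩ := exists_lt_of_lt_csSup
    (extensionEnergies_nonempty (f := f3) h) (sub_lt_self _ hε)
  have hsq : energy (relProd ν (MeasurableSpace.invariants_le T')) (Prod.map S' S')
      (Prod.map id T') ((f3 ∘ p) ∘ Prod.snd) ≤ sSup (extensionEnergies μ S T f3) :=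
    le_csSup (bddAbove_extensionEnergies h3) ⟨Z × Z, _, inferInstance, _, inferInstance, _, _, _,
      hZ.relProd, hp.comp isFactorMap_snd_relProd, rfl⟩
  have hpm := hp.measurePreserving.measurable
  rw [← hp.lintegral_osc_cubicAverage_comp h h1.measurable h2.measurable h3.measurable]
  refine (lintegral_osc_cubicAverage_pow_eight_le_energy_sub hZ (h1.comp hpm) (h2.comp hpm)
    (h3.comp hpm)).trans ?_
  gcongr
  linarith

theorem lintegral_osc_cubicAverage_eq_zero (h : IsCommutingSystem μ S T)
    (h1 : BoundedMeasurable f1 C) (h2 : BoundedMeasurable f2 C) (h3 : BoundedMeasurable f3 K) :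
    ∫⁻ x, osc (cubicAverage S T f1 f2 f3 · x) ∂μ = 0 := by
  refine (pow_eq_zero_iff (n := 8) (by norm_num)).1 (nonpos_iff_eq_zero.1 ?_)
  have hlim : Tendsto (fun ε : ℝ => ENNReal.ofReal (256 * C ^ 16 * (K + K) ^ 6 * ε)) (𝓝[>] 0)
      (𝓝 0) := by
    have hcont : Continuous fun ε : ℝ => ENNReal.ofReal (256 * C ^ 16 * (K + K) ^ 6 * ε) :=
      ENNReal.continuous_ofReal.comp (continuous_const_mul _)
    exact (hcont.tendsto' 0 0 (by simp)).mono_left nhdsWithin_le_nhds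
  refine ge_of_tendsto hlim ?_
  filter_upwards [self_mem_nhdsWithin] with ε hε
  exact lintegral_osc_cubicAverage_pow_eight_le_of_pos h h1 h2 h3 hε

end EnergyIncrement

section Coding

variable {X E : Type*} [MeasurableSpace X] [MeasurableSpace E] {μ : Measure X} {S T : X → X}
  {F : X → E}

/-- The translation by `a` on the arrays indexed by `ℕ × ℕ`. -/
def shift (a : ℕ × ℕ) (y : ℕ × ℕ → E) : ℕ × ℕ → E := fun n => y (n + a)

/-- The array of the values of `F` along the orbit of `x`. It intertwines `S` and `T` with the two
coordinate shifts, and so realises the observable `F` on a standard Borel system. -/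
def orbitArray (S T : X → X) (F : X → E) (x : X) : ℕ × ℕ → E :=
  fun n => F (S^[n.1] (T^[n.2] x))

lemma measurable_shift (a : ℕ × ℕ) : Measurable (shift a : (ℕ × ℕ → E) → ℕ × ℕ → E) :=
  measurable_pi_lambda _ fun n => measurable_pi_apply (n + a)

lemma measurable_orbitArray (hS : Measurable S) (hT : Measurable T) (hF : Measurable F) :
    Measurable (orbitArray S T F) :=
  measurable_pi_lambda _ fun n => hF.comp ((hS.iterate n.1).comp (hT.iterate n.2))

lemma isFactorMap_orbitArray (h : IsCommutingSystem μ S T) (hF : Measurable F) :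
    IsFactorMap (orbitArray S T F) μ S T (μ.map (orbitArray S T F)) (shift (1, 0))
      (shift (0, 1)) where
  measurePreserving :=
    (measurable_orbitArray h.left.measurable h.right.measurable hF).measurePreserving μ
  left x := funext fun n => by
    simp only [orbitArray, shift, Prod.fst_add, Prod.snd_add, add_zero, Function.iterate_succ_apply]
    rw [← (h.commute.iterate_right n.2) x]
  right x := rfl

lemma isCommutingSystem_shift (h : IsCommutingSystem μ S T) (hF : Measurable F) :
    IsCommutingSystem (μ.map (orbitArray S T F)) (shift (1, 0)) (shift (0, 1)) :=
  have hp := isFactorMap_orbitArray h hF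
  { left := hp.measurePreserving.of_semiconj h.left hp.left (measurable_shift _)
    right := hp.measurePreserving.of_semiconj h.right hp.right (measurable_shift _)
    commute := fun y => funext fun _ => congrArg y (add_right_comm _ _ _) }

theorem ae_exists_tendsto_cubicAverage [IsProbabilityMeasure μ] {f1 f2 f3 : X → ℝ} {C : ℝ}
    (h : IsCommutingSystem μ S T) (h1 : BoundedMeasurable f1 C) (h2 : BoundedMeasurable f2 C)
    (h3 : BoundedMeasurable f3 C) :
    ∀ᵐ x ∂μ, ∃ L, Tendsto (cubicAverage S T f1 f2 f3 · x) atTop (𝓝 L) := by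
  let I := Set.Icc (-C) C
  have : StandardBorelSpace I := measurableSet_Icc.standardBorel
  let F (x : X) : I × I × I :=
    (⟨f1 x, abs_le.1 (h1.abs_le x)⟩, ⟨f2 x, abs_le.1 (h2.abs_le x)⟩, ⟨f3 x, abs_le.1 (h3.abs_le x)⟩)
  have hF : Measurable F := h1.measurable.subtype_mk.prodMk
    (h2.measurable.subtype_mk.prodMk h3.measurable.subtype_mk)
  have hp := isFactorMap_orbitArray h hF
  have hY := isCommutingSystem_shift h hF
  have : IsProbabilityMeasure (μ.map (orbitArray S T F)) :=
    Measure.isProbabilityMeasure_map hp.measurePreserving.measurable.aemeasurable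
  have hval {c : (ℕ × ℕ → I × I × I) → I} (hc : Measurable c) :
      BoundedMeasurable (fun y => (c y : ℝ)) C :=
    ⟨measurable_subtype_coe.comp hc, fun y => abs_le.2 (c y).2⟩
  have hzero := measurable_pi_apply (X := fun _ : ℕ × ℕ => I × I × I) 0
  have hb1 := hval hzero.fst
  have hb2 := hval hzero.snd.fst
  have hb3 := hval hzero.snd.snd
  rw [← lintegral_osc_cubicAverage_eq_zero_iff h h1.measurable h2.measurable h3.measurable]
  exact (hp.lintegral_osc_cubicAverage_comp hY hb1.measurable hb2.measurable hb3.measurable).trans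
    (lintegral_osc_cubicAverage_eq_zero hY hb1 hb2 hb3)

end Coding

end CubicAverage

theorem pointwise_cubic_average_general {X : Type*} [MeasurableSpace X]
    (μ : Measure X) [IsProbabilityMeasure μ]
    (S T : X → X) (hS : MeasurePreserving S μ μ) (hT : MeasurePreserving T μ μ)
    (hcomm : ∀ x, S (T x) = T (S x))
    (f1 f2 f3 : X → ℝ) (hf1 : Measurable f1) (hf2 : Measurable f2) (hf3 : Measurable f3)
    (hb1 : ∃ C, ∀ x, |f1 x| ≤ C) (hb2 : ∃ C, ∀ x, |f2 x| ≤ C) (hb3 : ∃ C, ∀ x, |f3 x| ≤ C) :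
    ∀ᵐ x ∂μ, ∃ L : ℝ, Tendsto (fun N : ℕ =>
      ((N : ℝ) ^ 2)⁻¹ * ∑ i ∈ Finset.range N, ∑ j ∈ Finset.range N,
        f1 (S^[i] x) * f2 (T^[j] x) * f3 (S^[i] (T^[j] x)))
      atTop (nhds L) := by
  obtain ⟨C1, h1⟩ := hb1
  obtain ⟨C2, h2⟩ := hb2
  obtain ⟨C3, h3⟩ := hb3
  simp only [← CubicAverage.cubicAverage_eq_sum]
  exact CubicAverage.ae_exists_tendsto_cubicAverage (C := max C1 (max C2 C3)) ⟨hS, hT, hcomm⟩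
    ⟨hf1, fun x => le_max_of_le_left (h1 x)⟩
    ⟨hf2, fun x => le_max_of_le_right (le_max_of_le_left (h2 x))⟩
    ⟨hf3, fun x => le_max_of_le_right (le_max_of_le_right (h3 x))⟩

/-- pointwise convergence of the cubic average
`(1/N²) Σ_{i,j=0}^{N-1} f1(S^i x) f2(T^j x) f3(S^i T^j x)` for an ergodic system with
two commuting invertible measure-preserving transformations. -/
theorem pointwise_cubic_average {X : Type*} [MeasurableSpace X]
    (μ : Measure X) [IsProbabilityMeasure μ]
    (S T : X ≃ᵐ X) (hS : MeasurePreserving S μ μ) (hT : MeasurePreserving T μ μ)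
    (hcomm : ∀ x, S (T x) = T (S x))
    (herg : ∀ s : Set X, MeasurableSet s → ⇑S ⁻¹' s = s → ⇑T ⁻¹' s = s → μ s = 0 ∨ μ s = 1)
    (f1 f2 f3 : X → ℝ) (hf1 : Measurable f1) (hf2 : Measurable f2) (hf3 : Measurable f3)
    (hb1 : ∃ C, ∀ x, |f1 x| ≤ C) (hb2 : ∃ C, ∀ x, |f2 x| ≤ C) (hb3 : ∃ C, ∀ x, |f3 x| ≤ C) :
    ∀ᵐ x ∂μ, ∃ L : ℝ, Tendsto (fun N : ℕ =>
      ((N : ℝ) ^ 2)⁻¹ * ∑ i ∈ Finset.range N, ∑ j ∈ Finset.range N,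
        f1 ((⇑S)^[i] x) * f2 ((⇑T)^[j] x) * f3 ((⇑S)^[i] ((⇑T)^[j] x)))
      atTop (nhds L) :=
  pointwise_cubic_average_general μ S T hS hT hcomm f1 f2 f3 hf1 hf2 hf3 hb1 hb2 hb3
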